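/- arXiv:0802.2824 — 2 statements merged into one kernel-verified Lean document; each statement's English description precedes it below -/
import Mathlib

section
/- For every element g of the wreath product G(r,n) = ℤ_r ≀ S_n, the sum of the values at g of all irreducible complex characters of G(r,n) equals the number of absolute square roots of g, i.e. ∑_{χ ∈ Irr(G(r,n))} χ(g) = #{ v ∈ G(r,n) : v · v̄ = g }. -/
open Finset CategoryTheory

/-- The wreath product `ℤ_r ≀ S_n`: elements are pairs `(σ, z)` with
`σ` a permutation of `{1,…,n}` and `z ∈ (ℤ/rℤ)^n`.  The multiplication is
`(σ,c)·(τ,d) = (στ, (c_{τ⁻¹(i)} + d_i)_i)`, where in the paper's convention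
permutations compose left-to-right; translated to Lean's convention
(`(σ * τ) x = σ (τ x)`) this reads `(σ,c)·(τ,d) = (σ * τ, fun i => c (τ i) + d i)`,
i.e. the semidirect product of `Fin n → ZMod r` by `Equiv.Perm (Fin n)`
acting by permuting coordinates. -/
def Wreath (r n : ℕ) : Type := Equiv.Perm (Fin n) × (Fin n → ZMod r)

namespace Wreath

variable {r n : ℕ}

instance : Group (Wreath r n) where
  mul v w := ⟨v.1 * w.1, fun i => v.2 (w.1 i) + w.2 i⟩
  one := ⟨1, 0⟩
  inv v := ⟨v.1⁻¹, fun i => -v.2 (v.1⁻¹ i)⟩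
  mul_assoc a b c := Prod.ext (mul_assoc _ _ _) (funext fun i => add_assoc _ _ _)
  one_mul a := by
    refine Prod.ext (one_mul _) (funext fun i => ?_)
    show (0 : Fin n → ZMod r) (a.1 i) + a.2 i = a.2 i
    simp
  mul_one a := by
    refine Prod.ext (mul_one _) (funext fun i => ?_)
    show a.2 ((1 : Equiv.Perm (Fin n)) i) + (0 : Fin n → ZMod r) i = a.2 i
    simp
  inv_mul_cancel a := by
    refine Prod.ext (inv_mul_cancel _) (funext fun i => ?_)
    show -a.2 (a.1⁻¹ (a.1 i)) + a.2 i = (0 : Fin n → ZMod r) i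
    simp

instance [NeZero r] : Fintype (Wreath r n) :=
  inferInstanceAs (Fintype (Equiv.Perm (Fin n) × (Fin n → ZMod r)))

instance : DecidableEq (Wreath r n) :=
  inferInstanceAs (DecidableEq (Equiv.Perm (Fin n) × (Fin n → ZMod r)))

theorem mul_def (v w : Wreath r n) :
    v * w = ⟨v.1 * w.1, fun i => v.2 (w.1 i) + w.2 i⟩ := rfl

theorem one_def : (1 : Wreath r n) = ⟨1, 0⟩ := rfl

theorem inv_def (v : Wreath r n) : v⁻¹ = ⟨v.1⁻¹, fun i => -v.2 (v.1⁻¹ i)⟩ := rfl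

/-- The bar operation `(σ, z) ↦ (σ, −z)`. -/
def bar (v : Wreath r n) : Wreath r n := ⟨v.1, -v.2⟩

theorem bar_mul (v w : Wreath r n) : bar (v * w) = bar v * bar w := by
  refine Prod.ext rfl (funext fun i => ?_)
  show -(v.2 (w.1 i) + w.2 i) = -v.2 (w.1 i) + -w.2 i
  ring

theorem bar_bar (v : Wreath r n) : bar (bar v) = v := by
  refine Prod.ext rfl ?_
  show - - v.2 = v.2
  simp

/-- `bar` as a group automorphism. -/
def barAut : Wreath r n ≃* Wreath r n where
  toFun := bar
  invFun := bar
  left_inv := bar_bar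
  right_inv := bar_bar
  map_mul' := bar_mul

theorem bar_inv (v : Wreath r n) : bar v⁻¹ = (bar v)⁻¹ :=
  map_inv (barAut : Wreath r n ≃* Wreath r n) v

/-- `vᵗ := (v̄)⁻¹`. -/
def tr (v : Wreath r n) : Wreath r n := (bar v)⁻¹

/-- Conjugation `w ↦ π w πᵗ` maps absolute involutions to absolute involutions. -/
theorem conj_absInv {w : Wreath r n} (hw : w * bar w = 1) (π : Wreath r n) :
    (π * w * tr π) * bar (π * w * tr π) = 1 := by
  have h1 : bar (π * w * tr π) = bar π * bar w * π⁻¹ := by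
    rw [bar_mul, bar_mul, tr, bar_inv, bar_bar]
  calc (π * w * tr π) * bar (π * w * tr π)
      = π * (w * bar w) * π⁻¹ := by rw [h1, tr]; group
    _ = 1 := by rw [hw]; group

end Wreath

/-- The set of inversions of `σ`, encoded as ordered pairs `(i,j)` with `i < j`
and `σ j < σ i` (one representative for each unordered pair `{i,j}` with
`(j−i)(σ(j)−σ(i)) < 0`). -/
def invPairs {n : ℕ} (σ : Equiv.Perm (Fin n)) : Finset (Fin n × Fin n) :=
  Finset.univ.filter fun p => p.1 < p.2 ∧ σ p.2 < σ p.1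

/-- The 2-cycles of an involution `u`, encoded as ordered pairs `(i,j)` with `i < j`,
`u i = j` and `u j = i` (one representative for each unordered pair `{i,j}`). -/
def pairSet {n : ℕ} (u : Equiv.Perm (Fin n)) : Finset (Fin n × Fin n) :=
  Finset.univ.filter fun p => p.1 < p.2 ∧ u p.1 = p.2 ∧ u p.2 = p.1

/-- `sign_o(π,w) := (−1)^{#(Inv(|π|) ∩ Pair(|w|))}`. -/
def signO {r n : ℕ} (π w : Wreath r n) : ℤ :=
  (-1) ^ ((invPairs π.1 ∩ pairSet w.1).card)

/-- A family of finite-dimensional complex representations forming a complete set of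
pairwise non-isomorphic irreducible representations of `G`. -/
def IsCompleteIrrFamily {G : Type} [Monoid G] {ι : Type} (V : ι → FDRep ℂ G) : Prop :=
  (∀ i, Simple (V i)) ∧ (∀ i j, Nonempty (V i ≅ V j) → i = j) ∧
    ∀ W : FDRep ℂ G, Simple W → ∃ i, Nonempty (V i ≅ W)


section MatrixPart
variable {G : Type} [Group G] [Fintype G] {d : ℕ}

/-- scalar commutant for matrix representations -/
def ScM (M : G →* Matrix (Fin d) (Fin d) ℂ) : Prop :=
  ∀ X, (∀ g, M g * X = X * M g) → ∃ c : ℂ, X = c • 1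

lemma schurM [NeZero d] (M : G →* Matrix (Fin d) (Fin d) ℂ) (hM : ScM M)
    (X : Matrix (Fin d) (Fin d) ℂ) :
    ∑ g, M g * X * M g⁻¹ = ((Fintype.card G : ℂ) / d * X.trace) • 1 := by
  obtain ⟨c, hc⟩ := hM (∑ g, M g * X * M g⁻¹) (by
    intro h
    rw [Finset.mul_sum, Finset.sum_mul]
    refine Fintype.sum_equiv (Equiv.mulLeft h) _ _ (fun g => ?_)
    have : M (g⁻¹ * h⁻¹) * M h = M g⁻¹ := by rw [← map_mul]; simp
    simp only [Equiv.coe_mulLeft, mul_inv_rev, mul_assoc, this]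
    simp [mul_assoc])
  have ht := congrArg Matrix.trace hc
  rw [Matrix.trace_sum] at ht
  have : ∀ g, (M g * X * M g⁻¹).trace = X.trace := by
    intro g
    rw [Matrix.trace_mul_comm, ← mul_assoc, ← map_mul]; simp
  simp [this] at ht
  have hd : (d : ℂ) ≠ 0 := by simp [NeZero.ne d]
  rw [hc]
  congr 1
  field_simp
  exact ht.symm

lemma orthM [NeZero d] (M : G →* Matrix (Fin d) (Fin d) ℂ) (hM : ScM M)
    (i j k l : Fin d) :
    ∑ g, M g i j * M g⁻¹ k l =
      ((Fintype.card G : ℂ) / d) * ((if j = k then 1 else 0) * (if i = l then 1 else 0)) := by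
  have h := congrFun (congrFun (schurM M hM (Matrix.single j k 1)) i) l
  rw [Matrix.sum_apply] at h
  have h2 : ∀ g, (M g * Matrix.single j k (1:ℂ) * M g⁻¹) i l = M g i j * M g⁻¹ k l := by
    intro g
    rw [Matrix.mul_apply, Finset.sum_eq_single k]
    · simp
    · intro b _ hb
      rw [Matrix.mul_single_apply_of_ne _ _ _ _ _ hb]; simp
    · simp
  simp only [h2] at h
  rw [h]
  by_cases hjk : j = k
  · subst hjk
    simp [Matrix.one_apply]
  · simp [hjk]

lemma burnM [NeZero d] (M : G →* Matrix (Fin d) (Fin d) ℂ) (hM : ScM M)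
    (Y : Matrix (Fin d) (Fin d) ℂ) :
    ∑ g, (Y * M g⁻¹).trace • M g = ((Fintype.card G : ℂ) / d) • Y := by
  ext i j
  simp only [Matrix.sum_apply, Matrix.smul_apply, smul_eq_mul, Matrix.trace, Matrix.diag_apply,
    Matrix.mul_apply, Finset.sum_mul]
  rw [Finset.sum_comm]
  conv_lhs => enter [2, a]; rw [Finset.sum_comm]
  have : ∀ a b, ∑ g, Y a b * M g⁻¹ b a * M g i j =
      ((Fintype.card G : ℂ) / d) * (Y a b * ((if j = b then 1 else 0) * (if i = a then 1 else 0))) := by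
    intro a b
    have := orthM M hM i j b a
    calc _ = Y a b * ∑ g, M g i j * M g⁻¹ b a := by
            rw [Finset.mul_sum]; exact Finset.sum_congr rfl fun g _ => by ring
      _ = _ := by rw [this]; ring
  simp [this]

lemma normM [NeZero d] (M : G →* Matrix (Fin d) (Fin d) ℂ) (hM : ScM M) :
    ∑ g, (M g).trace * (M g⁻¹).trace = (Fintype.card G : ℂ) := by
  have h := congrArg Matrix.trace (burnM M hM 1)
  have hd : (d : ℂ) ≠ 0 := by simp [NeZero.ne d]
  simp only [one_mul, Matrix.trace_sum, Matrix.trace_smul, Matrix.trace_one, smul_eq_mul,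
    Fintype.card_fin] at h
  rw [div_mul_cancel₀ _ hd] at h
  rw [← h]
  exact Finset.sum_congr rfl fun g _ => by ring

lemma twistM [NeZero d] (M : G →* Matrix (Fin d) (Fin d) ℂ) (hM : ScM M)
    (A C : Matrix (Fin d) (Fin d) ℂ) :
    ∑ g, (A * (M g⁻¹).transpose * C * M g).trace =
      ((Fintype.card G : ℂ) / d) * (A * C.transpose).trace := by
  have key : ∀ g, (A * (M g⁻¹).transpose * C * M g).trace =
      ∑ i, ∑ l, ∑ k, ∑ j, A i j * C k l * (M g l i * M g⁻¹ k j) := by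
    intro g
    simp only [Matrix.trace, Matrix.diag_apply, Matrix.mul_apply, Finset.sum_mul,
      Matrix.transpose_apply]
    refine Finset.sum_congr rfl fun i _ => Finset.sum_congr rfl fun l _ =>
      Finset.sum_congr rfl fun k _ => Finset.sum_congr rfl fun j _ => by ring
  simp only [key]
  rw [Finset.sum_comm]
  simp only [Matrix.trace, Matrix.diag_apply, Matrix.mul_apply, Matrix.transpose_apply,
    Finset.mul_sum]
  refine Finset.sum_congr rfl fun i _ => ?_
  rw [Finset.sum_comm]
  refine Finset.sum_congr rfl fun l _ => ?_
  rw [Finset.sum_comm, Finset.sum_eq_single i]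
  · rw [Finset.sum_comm, Finset.sum_eq_single l]
    · rw [← Finset.mul_sum, orthM M hM]; simp; ring
    · intro j _ hj
      rw [← Finset.mul_sum, orthM M hM]; simp [hj.symm]
    · simp
  · intro k _ hk
    rw [Finset.sum_comm]
    refine Finset.sum_eq_zero fun j _ => ?_
    rw [← Finset.mul_sum, orthM M hM]; simp [hk.symm]
  · simp

/-- existence of a twisted-invariant form -/
lemma exists_form [NeZero d] (M : G →* Matrix (Fin d) (Fin d) ℂ) (hM : ScM M)
    (τ : G →* G) (hc : ∀ g, (M (τ g)).trace = (M g⁻¹).trace) :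
    ∃ J : Matrix (Fin d) (Fin d) ℂ, J ≠ 0 ∧ ∀ g, (M g).transpose * J * M (τ g) = J := by
  let J : Matrix (Fin d) (Fin d) ℂ → Matrix (Fin d) (Fin d) ℂ :=
    fun X => ∑ v, (M v).transpose * X * M (τ v)
  have hinv : ∀ X g, (M g).transpose * J X * M (τ g) = J X := by
    intro X g
    simp only [J, Finset.mul_sum, Finset.sum_mul]
    refine Fintype.sum_equiv (Equiv.mulRight g) _ _ (fun v => ?_)
    simp [mul_assoc]
  by_contra hcon
  have hz : ∀ X, J X = 0 := by
    intro X; by_contra h; exact hcon ⟨J X, h, hinv X⟩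
  have hent : ∀ a b, ∑ v, M v a a * M (τ v) b b = 0 := by
    intro a b
    have h := congrFun (congrFun (hz (Matrix.single a b 1)) a) b
    simp only [J, Matrix.sum_apply] at h
    rw [Matrix.zero_apply] at h
    rw [← h]
    refine Finset.sum_congr rfl fun v _ => ?_
    rw [Matrix.mul_apply, Finset.sum_eq_single b]
    · simp
    · intro k _ hk
      rw [Matrix.mul_single_apply_of_ne _ _ _ _ _ hk]; simp
    · simp
  have h0 : ∑ v, (M v).trace * (M (τ v)).trace = 0 := by
    simp only [Matrix.trace, Matrix.diag_apply, Finset.sum_mul_sum]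
    rw [Finset.sum_comm]
    refine Finset.sum_eq_zero fun a _ => ?_
    rw [Finset.sum_comm]
    exact Finset.sum_eq_zero fun b _ => hent a b
  simp only [hc] at h0
  rw [normM M hM] at h0
  simp at h0

lemma form_inv [NeZero d] (M : G →* Matrix (Fin d) (Fin d) ℂ) (hM : ScM M)
    (τ : G →* G) (J : Matrix (Fin d) (Fin d) ℂ) (hJ0 : J ≠ 0)
    (hJ : ∀ g, (M g).transpose * J * M (τ g) = J) :
    ∃ K, J * K = 1 := by
  obtain ⟨a, b, hab⟩ : ∃ a b, J a b ≠ 0 := by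
    by_contra h; push Not at h; exact hJ0 (by ext a b; simp [h])
  have hs : ∀ g, J * M (τ g) = (M g⁻¹).transpose * J := by
    intro g
    have h1 : (M g⁻¹).transpose * (M g).transpose = 1 := by
      rw [← Matrix.transpose_mul, ← map_mul]; simp
    calc J * M (τ g) = (M g⁻¹).transpose * (M g).transpose * J * M (τ g) := by rw [h1]; simp
      _ = (M g⁻¹).transpose * ((M g).transpose * J * M (τ g)) := by simp only [mul_assoc]
      _ = _ := by rw [hJ]
  let X : Matrix (Fin d) (Fin d) ℂ := Matrix.single b a 1
  have hX : (J * X).trace = J a b := by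
    rw [Matrix.trace_mul_comm]
    simp only [X, Matrix.trace, Matrix.diag_apply]
    rw [Finset.sum_eq_single b]
    · simp
    · intro k _ hk
      rw [Matrix.single_mul_apply_of_ne _ _ _ _ _ hk]
    · simp
  have hd : (d : ℂ) ≠ 0 := by simp [NeZero.ne d]
  have key : J * (∑ v, M (τ v) * X * (M v).transpose) =
      ((Fintype.card G : ℂ) / d * J a b) • 1 := by
    have h2 := congrArg Matrix.transpose (schurM M hM (J * X).transpose)
    rw [Matrix.trace_transpose, hX, Matrix.transpose_sum, Matrix.transpose_smul,
      Matrix.transpose_one] at h2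
    rw [← h2, Finset.mul_sum]
    refine Finset.sum_congr rfl fun v _ => ?_
    rw [← mul_assoc, ← mul_assoc, hs]
    simp [Matrix.transpose_mul, mul_assoc]
  have hne : (Fintype.card G : ℂ) / d * J a b ≠ 0 := by
    refine mul_ne_zero (div_ne_zero (by simp) hd) hab
  refine ⟨((Fintype.card G : ℂ) / d * J a b)⁻¹ • ∑ v, M (τ v) * X * (M v).transpose, ?_⟩
  rw [Matrix.mul_smul, key, smul_smul, inv_mul_cancel₀ hne, one_smul]

lemma indicator_one [NeZero d] (M : G →* Matrix (Fin d) (Fin d) ℂ) (hM : ScM M)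
    (τ : G →* G) (S : Matrix (Fin d) (Fin d) ℂ) (hS0 : S ≠ 0) (hsym : S.transpose = S)
    (hS : ∀ g, (M g).transpose * S * M (τ g) = S) :
    ∑ g, (M (τ g * g)).trace = (Fintype.card G : ℂ) := by
  obtain ⟨K, hK⟩ := form_inv M hM τ S hS0 hS
  have hK' : K * S = 1 := mul_eq_one_comm.mp hK
  have hd : (d : ℂ) ≠ 0 := by simp [NeZero.ne d]
  have hs : ∀ g, M (τ g) = K * (M g⁻¹).transpose * S := by
    intro g
    have h1 : (M g⁻¹).transpose * (M g).transpose = 1 := by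
      rw [← Matrix.transpose_mul, ← map_mul]; simp
    calc M (τ g) = K * S * M (τ g) := by rw [hK']; simp
      _ = K * ((M g⁻¹).transpose * (M g).transpose) * S * M (τ g) := by rw [h1]; simp
      _ = K * (M g⁻¹).transpose * ((M g).transpose * S * M (τ g)) := by simp only [mul_assoc]
      _ = _ := by rw [hS]
  have := twistM M hM K S
  rw [hsym, hK'] at this
  simp only [map_mul, hs]
  rw [this]
  simp [hd]

end MatrixPart

section LinearPart

/-- scalar commutant -/
def Sc {G V : Type} [Group G] [AddCommGroup V] [Module ℂ V] (ρ : Representation ℂ G V) : Prop :=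
  ∀ X : Module.End ℂ V, (∀ g, ρ g * X = X * ρ g) → ∃ c : ℂ, X = c • 1

variable {G V : Type} [Group G] [AddCommGroup V] [Module ℂ V] [FiniteDimensional ℂ V]

/-- the matrix representation -/
noncomputable def matRep (ρ : Representation ℂ G V) :
    G →* Matrix (Fin (Module.finrank ℂ V)) (Fin (Module.finrank ℂ V)) ℂ :=
  ((LinearMap.toMatrixAlgEquiv (Module.finBasis ℂ V)).toAlgHom : _ →* _).comp ρ

lemma matRep_apply (ρ : Representation ℂ G V) (g : G) :
    matRep ρ g = LinearMap.toMatrixAlgEquiv (Module.finBasis ℂ V) (ρ g) := rfl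

lemma matRep_sc (ρ : Representation ℂ G V) (h : Sc ρ) : ScM (matRep ρ) := by
  intro X hX
  set e := LinearMap.toMatrixAlgEquiv (Module.finBasis ℂ V)
  obtain ⟨c, hc⟩ := h (e.symm X) (fun g => by
    apply e.injective
    simpa [matRep_apply] using hX g)
  refine ⟨c, ?_⟩
  have := congrArg e hc
  simpa using this

lemma trace_toMat (f : Module.End ℂ V) :
    (LinearMap.toMatrixAlgEquiv (Module.finBasis ℂ V) f).trace = LinearMap.trace ℂ V f := by
  rw [LinearMap.trace_eq_matrix_trace ℂ (Module.finBasis ℂ V)]; rfl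

lemma burn [Fintype G] [Nontrivial V] (ρ : Representation ℂ G V) (h : Sc ρ) (Y : Module.End ℂ V) :
    ∃ c : ℂ, Y = c • ∑ g, LinearMap.trace ℂ V (Y * ρ g⁻¹) • ρ g := by
  have : NeZero (Module.finrank ℂ V) := ⟨Module.finrank_pos.ne'⟩
  set e := LinearMap.toMatrixAlgEquiv (Module.finBasis ℂ V) with he
  have hb := burnM (matRep ρ) (matRep_sc ρ h) (e Y)
  have hd : ((Fintype.card G : ℂ) / (Module.finrank ℂ V : ℂ)) ≠ 0 := by
    refine div_ne_zero (by simp) (by simp [NeZero.ne])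
  refine ⟨((Fintype.card G : ℂ) / (Module.finrank ℂ V : ℂ))⁻¹, ?_⟩
  apply e.injective
  rw [map_smul, map_sum]
  simp only [map_smul]
  have h2 : ∀ g, LinearMap.trace ℂ V (Y * ρ g⁻¹) = (e Y * matRep ρ g⁻¹).trace := by
    intro g
    rw [matRep_apply, ← he, ← map_mul, he, trace_toMat]
  simp only [h2]
  simp only [matRep_apply, ← he] at hb
  simp only [matRep_apply, ← he]
  rw [hb, smul_smul, inv_mul_cancel₀ hd, one_smul]

/-- existence of a nonzero vector with nonzero norm for every nondegenerate adapted form -/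
def PP (K : Type) [Group K] (t : K → K) : Prop :=
  ∀ (V : Type) [AddCommGroup V] [Module ℂ V] [FiniteDimensional ℂ V] [Nontrivial V]
    (ρ : Representation ℂ K V) (_ : Sc ρ) (B : V →ₗ[ℂ] V →ₗ[ℂ] ℂ)
    (_ : ∀ x, (∀ y, B x y = 0) → x = 0)
    (_ : ∀ g x y, B (ρ g x) y = B x (ρ (t g) y)), ∃ x, B x x ≠ 0

lemma exists_atom [Finite G] (ρ : Representation ℂ G V) (q : Subrepresentation ρ) (hq : q ≠ ⊥) :
    ∃ w : Subrepresentation ρ, w ≤ q ∧ Nontrivial w.toSubmodule ∧ Sc w.toRepresentation ∧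
      ∃ P : Module.End ℂ V, (∀ g, ρ g * P = P * ρ g) ∧ (∀ x, P x ∈ w.toSubmodule) ∧
        ∀ x ∈ w.toSubmodule, P x = x := by
  classical
  have : Fintype G := Fintype.ofFinite G
  have : NeZero (Nat.card G : ℂ) := ⟨by simp⟩
  have hat : IsAtomic (Subrepresentation ρ) := by
    rw [OrderIso.isAtomic_iff (Subrepresentation.subrepresentationSubmoduleOrderIso (ρ := ρ))]
    infer_instance
  obtain ⟨w, hw, hwq⟩ := (eq_bot_or_exists_atom_le q).resolve_left hq
  obtain ⟨p, hp⟩ := exists_isCompl w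
  have hp' : IsCompl w.toSubmodule p.toSubmodule := by
    constructor
    · rw [disjoint_iff]
      exact congrArg Subrepresentation.toSubmodule hp.inf_eq_bot
    · rw [codisjoint_iff]
      exact congrArg Subrepresentation.toSubmodule hp.sup_eq_top
  have hnt : Nontrivial w.toSubmodule := by
    rw [Submodule.nontrivial_iff_ne_bot]
    intro h
    exact hw.1 (Subrepresentation.toSubmodule_injective h)
  refine ⟨w, hwq, hnt, ?_, w.toSubmodule.subtype ∘ₗ w.toSubmodule.projectionOnto _ hp',
    ?_, ?_, ?_⟩
  · intro X hX
    obtain ⟨c, hc⟩ := Module.End.exists_eigenvalue X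
    refine ⟨c, ?_⟩
    let k : Subrepresentation ρ := ⟨(Module.End.eigenspace X c).map w.toSubmodule.subtype, by
      rintro g _ ⟨v, hv, rfl⟩
      refine ⟨w.toRepresentation g v, ?_, rfl⟩
      have h1 := LinearMap.congr_fun (hX g) v
      simp only [SetLike.mem_coe, Module.End.mem_eigenspace_iff] at hv ⊢
      rw [Module.End.mul_apply, Module.End.mul_apply] at h1
      rw [← h1, hv, map_smul]⟩
    have hkw : k ≤ w := by
      rintro _ ⟨v, hv, rfl⟩
      exact v.2
    have hk : k ≠ ⊥ := by
      intro h
      obtain ⟨v, hv, hv0⟩ := hc.exists_hasEigenvector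
      apply hv0
      have : (v : V) ∈ k := ⟨v, hv, rfl⟩
      rw [h] at this
      exact Subtype.ext this
    have hkw' := (hw.le_iff_eq hk).mp hkw
    ext v
    have : (v : V) ∈ k := by rw [hkw']; exact v.2
    obtain ⟨v', hv', h⟩ := this
    have hvv : v' = v := Subtype.ext h
    subst hvv
    rw [SetLike.mem_coe, Module.End.mem_eigenspace_iff] at hv'
    rw [hv']; simp
  · intro g
    ext x
    obtain ⟨a, ha, b, hb, rfl⟩ := Submodule.mem_sup.mp
      (show x ∈ w.toSubmodule ⊔ p.toSubmodule by rw [hp'.sup_eq_top]; trivial)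
    have e1 : ∀ y (hy : y ∈ w.toSubmodule), w.toSubmodule.projectionOnto _ hp' y = ⟨y, hy⟩ :=
      fun y hy => Submodule.projectionOnto_apply_left hp' ⟨y, hy⟩
    have e2 : ∀ y (hy : y ∈ p.toSubmodule), w.toSubmodule.projectionOnto _ hp' y = 0 :=
      fun y hy => Submodule.projectionOnto_apply_right hp' ⟨y, hy⟩
    simp [e1 a ha, e2 b hb, e1 _ (w.apply_mem_toSubmodule g ha),
      e2 _ (p.apply_mem_toSubmodule g hb)]
  · intro x; simp
  · intro x hx
    exact congrArg Subtype.val (Submodule.projectionOnto_apply_left hp' ⟨x, hx⟩)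

lemma PP_step {K L : Type} [Group K] [Group L] [Finite K] [Finite L] (t : K → K) (tL : L → L)
    (ht : Function.Involutive t)
    (φ : L →* K) (hφ : ∀ l, φ (tL l) = t (φ l))
    (hconj : ∀ g, ∃ l, φ l * g * (φ l)⁻¹ = t g) (hL : PP L tL) : PP K t := by
  classical
  intro V _ _ _ _ ρ hρ B hB hBt
  have : Fintype K := Fintype.ofFinite K
  have hself : ∀ Y : Module.End ℂ V, (∀ l, ρ (φ l) * Y = Y * ρ (φ l)) →
      ∀ x y, B (Y x) y = B x (Y y) := by
    intro Y hY x y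
    obtain ⟨c, hc⟩ := burn ρ hρ Y
    have ha : ∀ g, LinearMap.trace ℂ V (Y * ρ (t g)⁻¹) = LinearMap.trace ℂ V (Y * ρ g⁻¹) := by
      intro g
      obtain ⟨l, hl⟩ := hconj g
      rw [← hl]
      have : Y * ρ (φ l * g * (φ l)⁻¹)⁻¹ = ρ (φ l) * (Y * ρ g⁻¹ * ρ (φ l)⁻¹) := by
        rw [← mul_assoc, ← mul_assoc, hY]
        simp [mul_assoc]
      rw [this, LinearMap.trace_mul_comm, mul_assoc, mul_assoc, ← map_mul, ← map_mul]
      simp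
    have h1 : B (Y x) y = c * ∑ g, LinearMap.trace ℂ V (Y * ρ g⁻¹) * B x (ρ (t g) y) := by
      conv_lhs => rw [hc]
      simp [LinearMap.sum_apply, hBt]
    have h2 : B x (Y y) = c * ∑ g, LinearMap.trace ℂ V (Y * ρ g⁻¹) * B x (ρ g y) := by
      conv_lhs => rw [hc]
      simp [LinearMap.sum_apply]
    rw [h1, h2]
    congr 1
    refine Fintype.sum_equiv ht.toPerm _ _ (fun g => ?_)
    simp [ha]
  let σ : Representation ℂ L V := ρ.comp φ
  have htop : (⊤ : Subrepresentation σ) ≠ ⊥ := by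
    intro h
    have := congrArg Subrepresentation.toSubmodule h
    exact (top_ne_bot : (⊤ : Submodule ℂ V) ≠ ⊥) this
  obtain ⟨w, -, hnt, hsc, P, hP, hPw, hPid⟩ := exists_atom σ ⊤ htop
  have hPs := hself P hP
  obtain ⟨x, hx⟩ := hL w.toSubmodule w.toRepresentation hsc (B.domRestrict₁₂ w.toSubmodule w.toSubmodule)
    (by
      intro x hx
      apply Subtype.ext
      apply hB
      intro y
      have := hPs x y
      rw [hPid x x.2] at this
      rw [this]
      exact hx ⟨P y, hPw y⟩)
    (by
      intro g x y
      have := hBt (φ g) x y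
      rw [← hφ] at this
      exact this)
  exact ⟨x, hx⟩

lemma PP_base {K : Type} [Group K] [Subsingleton K] (t : K → K) : PP K t := by
  intro V _ _ _ _ ρ hρ B hB hBt
  obtain ⟨v, hv⟩ := exists_ne (0 : V)
  obtain ⟨y, hy⟩ : ∃ y, B v y ≠ 0 := by
    by_contra h; push Not at h; exact hv (hB v h)
  obtain ⟨f, hf⟩ := Module.Projective.exists_dual_eq_one ℂ hv
  obtain ⟨c, hc⟩ := hρ (LinearMap.smulRight f y) (fun g => by
    rw [Subsingleton.elim g 1]; simp)
  have := LinearMap.congr_fun hc v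
  simp [hf] at this
  refine ⟨v, fun h => hy ?_⟩
  rw [this]; simp [h]

lemma indicator_of_PP [Fintype G] [Nontrivial V] (τ : G →* G) (hτ : ∀ g, τ (τ g) = g)
    (hPP : PP G (fun g => (τ g)⁻¹))
    (hconj : ∀ g, ∃ h, h * g * h⁻¹ = (τ g)⁻¹)
    (ρ : Representation ℂ G V) (hρ : Sc ρ) :
    ∑ g, ρ.character (τ g * g) = (Fintype.card G : ℂ) := by
  have : NeZero (Module.finrank ℂ V) := ⟨Module.finrank_pos.ne'⟩
  set M := matRep ρ with hMdef
  have hM := matRep_sc ρ hρ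
  have htr : ∀ g, (M g).trace = ρ.character g := fun g => trace_toMat _
  obtain ⟨J, hJ0, hJ⟩ := exists_form M hM τ (fun g => by
    rw [htr, htr]
    obtain ⟨h, hh⟩ := hconj g⁻¹
    rw [map_inv, inv_inv] at hh
    rw [← hh, Representation.char_conj])
  let b := Module.finBasis ℂ V
  let B : V →ₗ[ℂ] V →ₗ[ℂ] ℂ := Matrix.toLinearMap₂ b b J
  have hBform : ∀ x y, B x y = b.repr x ⬝ᵥ J.mulVec (b.repr y) := by
    intro x y
    simp only [B, Matrix.toLinearMap₂_apply, dotProduct, Matrix.mulVec, Finset.mul_sum, smul_eq_mul]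
    refine Finset.sum_congr rfl fun i _ => Finset.sum_congr rfl fun j _ => by ring
  have hrep : ∀ g x, (b.repr (ρ g x) : _ → ℂ) = (M g).mulVec (b.repr x) := by
    intro g x
    exact (LinearMap.toMatrix_mulVec_repr b b (ρ g) x).symm
  obtain ⟨K, hK⟩ := form_inv M hM τ J hJ0 hJ
  obtain ⟨x, hx⟩ := hPP V ρ hρ B
    (by
      intro x hx
      have h1 : Matrix.vecMul (b.repr x) J = 0 := by
        ext j
        have := hx (b j)
        rw [hBform, Matrix.dotProduct_mulVec, b.repr_self, Finsupp.single_eq_pi_single,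
          dotProduct_single, mul_one] at this
        exact this
      have h2 : Matrix.vecMul (Matrix.vecMul (b.repr x) J) K = 0 := by rw [h1]; simp
      rw [Matrix.vecMul_vecMul, hK, Matrix.vecMul_one] at h2
      apply b.repr.injective
      ext i
      simpa using congrFun h2 i)
    (by
      intro g x y
      rw [hBform, hBform, hrep, hrep]
      have h1 : (M g).transpose * J = J * M (τ g)⁻¹ := by
        have h2 : M (τ g) * M (τ g)⁻¹ = 1 := by rw [← map_mul]; simp
        calc (M g).transpose * J = (M g).transpose * J * (M (τ g) * M (τ g)⁻¹) := by
              rw [h2, mul_one]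
          _ = _ := by rw [← mul_assoc, hJ]
      rw [Matrix.mulVec_mulVec, ← h1, ← Matrix.mulVec_mulVec, Matrix.dotProduct_mulVec,
        Matrix.dotProduct_mulVec, Matrix.dotProduct_mulVec, Matrix.vecMul_transpose])
  have hxx : ∃ u : Fin (Module.finrank ℂ V) → ℂ, u ⬝ᵥ J.mulVec u ≠ 0 :=
    ⟨b.repr x, by rwa [← hBform]⟩
  obtain ⟨u, hu⟩ := hxx
  have hJt : ∀ g, (M g).transpose * J.transpose * M (τ g) = J.transpose := by
    intro g
    have := congrArg Matrix.transpose (hJ (τ g))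
    rw [hτ] at this
    simpa [Matrix.transpose_mul, mul_assoc] using this
  have := indicator_one M hM τ (J + J.transpose) (fun h => by
      have h1 : u ⬝ᵥ (J + J.transpose).mulVec u = 0 := by rw [h]; simp
      rw [Matrix.add_mulVec, dotProduct_add, Matrix.mulVec_transpose,
        dotProduct_comm u (Matrix.vecMul u J), ← Matrix.dotProduct_mulVec, ← two_mul] at h1
      exact hu (by simpa using h1))
    (by simp [add_comm]) (fun g => by rw [mul_add, add_mul, hJ, hJt])
  simpa only [htr] using this

end LinearPart

section CombPart

lemma exists_reverse {n r : ℕ} (σ : Equiv.Perm (Fin n)) (z : Fin n → ZMod r) (a : Fin n) :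
    ∃ (π : Equiv.Perm (Fin n)) (y : Fin n → ZMod r),
      (∀ i, π (σ i) = σ⁻¹ (π i)) ∧ (∀ i, y (σ i) + z i = z (σ⁻¹ (π i)) + y i) ∧
      (π a = a ∧ y a = 0) ∧ ∀ i, σ i = i → π i = i ∧ y i = 0 := by
  classical
  obtain ⟨c, hc1, hc2, hca⟩ : ∃ c : Fin n → Fin n, (∀ x y, σ.SameCycle x y → c x = c y) ∧
      (∀ x, σ.SameCycle (c x) x) ∧ c a = a := by
    let S := Equiv.Perm.SameCycle.setoid σ
    refine ⟨fun x => if σ.SameCycle a x then a else (Quotient.mk S x).out, ?_, ?_, ?_⟩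
    · intro x y hxy
      have h1 : σ.SameCycle a x ↔ σ.SameCycle a y :=
        ⟨fun h => h.trans hxy, fun h => h.trans hxy.symm⟩
      have h2 : Quotient.mk S x = Quotient.mk S y := Quotient.sound hxy
      simp only [h1, h2]
    · intro x
      by_cases h : σ.SameCycle a x
      · simp only [h, if_true]
      · simp only [h, if_false]
        exact Quotient.exact (s := S) (Quotient.out_eq _)
    · exact if_pos (Equiv.Perm.SameCycle.refl σ a)
  have hm : ∀ x, ∃ m : ℕ, (σ ^ m) (c x) = x := fun x => by
    obtain ⟨m, -, h⟩ := (hc2 x).exists_pow_eq'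
    exact ⟨m, h⟩
  choose m hm using hm
  let F : Fin n → ℕ → ZMod r := fun c k =>
    ∑ j ∈ Finset.range k, (z ((σ⁻¹ ^ (j + 1)) c) - z ((σ ^ j) c))
  let p : Fin n → Fin n := fun x => (σ⁻¹ ^ (m x)) (c x)
  let y : Fin n → ZMod r := fun x => F (c x) (m x)
  have hfix : ∀ (e : Fin n) (k : ℕ), (σ ^ k) e = e → (σ⁻¹ ^ k) e = e := by
    intro e k h
    rw [inv_pow, Equiv.Perm.inv_eq_iff_eq, h]
  have hF0 : ∀ e k, (σ ^ k) e = e → F e k = 0 := by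
    intro e k h
    simp only [F, Finset.sum_sub_distrib, sub_eq_zero]
    rw [← Finset.sum_range_reflect]
    refine Finset.sum_congr rfl fun j hj => ?_
    have hj := Finset.mem_range.mp hj
    congr 1
    rw [inv_pow, Equiv.Perm.inv_eq_iff_eq, ← Equiv.Perm.mul_apply, ← pow_add]
    rw [show k - 1 - j + 1 + j = k by omega, h]
  have hFadd : ∀ e k l, (σ ^ k) e = e → F e (k + l) = F e l := by
    intro e k l h
    have h0 := hF0 e k h
    have hi := hfix e k h
    simp only [F] at h0 ⊢
    rw [Finset.sum_range_add, h0, zero_add]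
    refine Finset.sum_congr rfl fun j _ => ?_
    have e1 : (σ⁻¹ ^ (k + j + 1)) e = (σ⁻¹ ^ (j + 1)) e := by
      rw [show k + j + 1 = (j + 1) + k by ring, pow_add σ⁻¹ (j + 1) k, Equiv.Perm.mul_apply, hi]
    have e2 : (σ ^ (k + j)) e = (σ ^ j) e := by
      rw [add_comm k j, pow_add, Equiv.Perm.mul_apply, h]
    rw [e1, e2]
  have hFeq : ∀ e k l, k ≤ l → (σ ^ k) e = (σ ^ l) e → F e k = F e l := by
    intro e k l hkl h
    obtain ⟨q, rfl⟩ := Nat.exists_eq_add_of_le hkl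
    rw [pow_add, Equiv.Perm.mul_apply] at h
    have h1 := (σ ^ k).injective h
    rw [add_comm, hFadd e q k h1.symm]
  have hy : ∀ x k, (σ ^ k) (c x) = x → y x = F (c x) k := by
    intro x k h
    have h' := (hm x).trans h.symm
    rcases le_total (m x) k with hk | hk
    · exact hFeq _ _ _ hk h'
    · exact (hFeq _ _ _ hk h'.symm).symm
  have hp : ∀ x (k : ℤ), (σ ^ k) (c x) = x → p x = (σ ^ (-k)) (c x) := by
    intro x k h
    have h' : (σ ^ (m x : ℤ)) (c x) = (σ ^ k) (c x) := by
      rw [h, zpow_natCast]; exact hm x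
    show (σ⁻¹ ^ (m x)) (c x) = _
    rw [inv_pow, Equiv.Perm.inv_eq_iff_eq, ← zpow_natCast, ← Equiv.Perm.mul_apply, ← zpow_add,
      add_comm, zpow_add, Equiv.Perm.mul_apply, h', ← Equiv.Perm.mul_apply, ← zpow_add]
    simp
  have hpinv : Function.Involutive p := by
    intro x
    have h1 : p x = (σ ^ (-(m x : ℤ))) (c x) := hp x (m x) (by rw [zpow_natCast]; exact hm x)
    have h2 : c (p x) = c x := by
      apply hc1
      rw [h1]
      exact (Equiv.Perm.sameCycle_zpow_left.mpr (hc2 x))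
    rw [hp (p x) (-(m x : ℤ)) (by rw [h2, h1]), h2, neg_neg, zpow_natCast]
    exact hm x
  have hcσ : ∀ x, c (σ x) = c x := fun x =>
    hc1 _ _ (Equiv.Perm.sameCycle_apply_left.mpr (Equiv.Perm.SameCycle.refl _ _))
  have hsucc : ∀ x, (σ ^ (m x + 1)) (c (σ x)) = σ x := by
    intro x
    rw [hcσ, pow_succ', Equiv.Perm.mul_apply, hm]
  have hcbase : ∀ x, c x = x → p x = x ∧ y x = 0 := by
    intro x hx
    refine ⟨?_, ?_⟩
    · have := hp x 0 (by simpa using hx)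
      simpa [hx] using this
    · have := hy x 0 (by simpa using hx)
      simpa [F] using this
  have hpσ : ∀ x, p (σ x) = σ⁻¹ (p x) := by
    intro x
    rw [hp (σ x) ((m x + 1 : ℕ) : ℤ) (by rw [zpow_natCast]; exact hsucc x), hcσ]
    show _ = σ⁻¹ ((σ⁻¹ ^ (m x)) (c x))
    rw [← Equiv.Perm.mul_apply, ← pow_succ', zpow_neg, zpow_natCast, inv_pow]
  refine ⟨hpinv.toPerm, y, hpσ, ?_, hcbase a hca, ?_⟩
  · intro x
    rw [hy (σ x) (m x + 1) (hsucc x), hcσ]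
    show F (c x) (m x + 1) + z x = z (σ⁻¹ ((σ⁻¹ ^ (m x)) (c x))) + F (c x) (m x)
    have : F (c x) (m x + 1) = F (c x) (m x) + (z ((σ⁻¹ ^ (m x + 1)) (c x)) - z x) := by
      simp only [F]
      rw [Finset.sum_range_succ, hm]
    rw [this, ← Equiv.Perm.mul_apply, ← pow_succ']
    ring
  · intro x hx
    apply hcbase
    obtain ⟨k, hk⟩ := (hc2 x).symm
    rw [← hk]
    exact Function.IsFixedPt.perm_zpow hx k

namespace Wreath
variable {r n : ℕ}

lemma tr_eq (g : Wreath r n) : tr g = ⟨g.1⁻¹, fun i => g.2 (g.1⁻¹ i)⟩ := by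
  refine Prod.ext rfl (funext fun i => ?_)
  show - (-g.2) (g.1⁻¹ i) = _
  simp

lemma exists_conj (g : Wreath r n) (a : Fin n) :
    ∃ h : Wreath r n, h * g * h⁻¹ = tr g ∧ (h.1 a = a ∧ h.2 a = 0) ∧
      ∀ i, g.1 i = i → h.1 i = i ∧ h.2 i = 0 := by
  obtain ⟨π, y, h1, h2, h3, h4⟩ := exists_reverse g.1 g.2 a
  obtain ⟨h, hh1, hh2⟩ : ∃ h : Wreath r n, h.1 = π ∧ h.2 = y := ⟨⟨π, y⟩, rfl, rfl⟩
  subst hh1 hh2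
  refine ⟨h, ?_, h3, h4⟩
  refine mul_inv_eq_iff_eq_mul.mpr ?_
  rw [tr_eq]
  exact Prod.ext (Equiv.ext h1) (funext h2)

/-- the chain of subgroups -/
def HH (r n k : ℕ) : Subgroup (Wreath r n) where
  carrier := {g | ∀ i : Fin n, k ≤ (i : ℕ) → g.1 i = i ∧ g.2 i = 0}
  one_mem' := fun i _ => ⟨rfl, rfl⟩
  mul_mem' := by
    intro g h hg hh i hi
    obtain ⟨h1, h2⟩ := hh i hi
    obtain ⟨g1, g2⟩ := hg i hi
    refine ⟨?_, ?_⟩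
    · show g.1 (h.1 i) = i
      rw [h1, g1]
    · show g.2 (h.1 i) + h.2 i = 0
      rw [h1, g2, h2, add_zero]
  inv_mem' := by
    intro g hg i hi
    obtain ⟨g1, g2⟩ := hg i hi
    have : g.1⁻¹ i = i := by rw [Equiv.Perm.inv_eq_iff_eq, g1]
    refine ⟨this, ?_⟩
    show -g.2 (g.1⁻¹ i) = 0
    rw [this, g2, neg_zero]

lemma tr_mem {k : ℕ} {g : Wreath r n} (hg : g ∈ HH r n k) : tr g ∈ HH r n k := by
  refine inv_mem ?_
  intro i hi
  obtain ⟨g1, g2⟩ := hg i hi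
  refine ⟨g1, ?_⟩
  show - g.2 i = 0
  rw [g2, neg_zero]

lemma tr_tr (g : Wreath r n) : tr (tr g) = g := by
  simp only [tr, bar_inv, bar_bar, inv_inv]

lemma HH_mono {k l : ℕ} (h : k ≤ l) : HH r n k ≤ HH r n l :=
  fun _ hg i hi => hg i (h.trans hi)

lemma PP_HH [NeZero r] (k : ℕ) (hk : k ≤ n) :
    PP (HH r n k) (fun g => ⟨tr g.1, tr_mem g.2⟩) := by
  induction k with
  | zero =>
    have : Subsingleton (HH r n 0) := by
      refine ⟨fun a b => Subtype.ext ?_⟩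
      refine Prod.ext (Equiv.ext fun i => ?_) (funext fun i => ?_)
      · rw [(a.2 i (Nat.zero_le _)).1, (b.2 i (Nat.zero_le _)).1]
      · rw [(a.2 i (Nat.zero_le _)).2, (b.2 i (Nat.zero_le _)).2]
    exact PP_base _
  | succ k ih =>
    refine PP_step _ _ (fun g => Subtype.ext (tr_tr g.1))
      (Subgroup.inclusion (HH_mono (Nat.le_succ k))) (fun l => rfl) ?_ (ih (by omega))
    intro g
    obtain ⟨h, h1, h2, h3⟩ := exists_conj g.1 ⟨k, by omega⟩
    refine ⟨⟨h, ?_⟩, Subtype.ext h1⟩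
    intro i hi
    rcases Nat.eq_or_lt_of_le hi with hi | hi
    · have : i = ⟨k, by omega⟩ := Fin.ext hi.symm
      rw [this]; exact h2
    · exact h3 i (g.2 i hi).1

lemma PP_Wreath [NeZero r] (hn : 0 < n) : PP (Wreath r n) tr := by
  refine PP_step _ _ tr_tr (HH r n n).subtype (fun l => rfl) ?_ (PP_HH n le_rfl)
  intro g
  obtain ⟨h, h1, -, -⟩ := exists_conj g ⟨0, hn⟩
  exact ⟨⟨h, fun i hi => absurd i.2 (by omega)⟩, h1⟩

end Wreath
end CombPart

section Final

variable {G : Type} [Group G] [Fintype G]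

lemma simple_of_sc {V : Type} [AddCommGroup V] [Module ℂ V] [FiniteDimensional ℂ V] [Nontrivial V]
    (ρ : Representation ℂ G V) (h : Sc ρ) : Simple (FDRep.of ρ) := by
  rw [FDRep.simple_iff_char_is_norm_one]
  have : NeZero (Module.finrank ℂ V) := ⟨Module.finrank_pos.ne'⟩
  have := normM (matRep ρ) (matRep_sc ρ h)
  simp only [matRep_apply, trace_toMat] at this
  rw [Nat.card_eq_fintype_card, ← this]
  rfl

lemma sc_of_simple (V : FDRep ℂ G) (h : Simple V) : Sc V.ρ ∧ Nontrivial V := by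
  have hinv : Invertible (Nat.card G : ℂ) := invertibleOfNonzero (by simp)
  rw [FDRep.simple_iff_char_is_norm_one] at h
  have h2 := Representation.card_inv_mul_sum_char_mul_char_eq_finrank (G := G) V.ρ V.ρ
  have h3 : ∑ g : G, Representation.character V.ρ g * Representation.character V.ρ g⁻¹ =
      Nat.card G := h
  rw [h3, inv_mul_cancel₀ (by simp)] at h2
  have h4 : Module.finrank ℂ (Representation.IntertwiningMap V.ρ V.ρ) = 1 := by
    exact_mod_cast h2.symm
  have hnt : Nontrivial V := by
    by_contra hc
    rw [not_nontrivial_iff_subsingleton] at hc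
    have : Subsingleton (Representation.IntertwiningMap V.ρ V.ρ) := by
      refine ⟨fun a b => ?_⟩
      ext x
      exact Subsingleton.elim _ _
    rw [Module.finrank_zero_of_subsingleton] at h4
    omega
  refine ⟨?_, hnt⟩
  intro X hX
  let f : Representation.IntertwiningMap V.ρ V.ρ := ⟨X, fun g => (hX g).symm⟩
  let e : Representation.IntertwiningMap V.ρ V.ρ := ⟨LinearMap.id, fun g => rfl⟩
  have he : e ≠ 0 := by
    intro h0
    obtain ⟨v, hv⟩ := exists_ne (0 : V)
    apply hv
    exact congrArg (fun (F : Representation.IntertwiningMap V.ρ V.ρ) => F v) h0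
  obtain ⟨c, hc⟩ := (finrank_eq_one_iff_of_nonzero' e he).mp h4 f
  refine ⟨c, ?_⟩
  ext v
  exact congrArg (fun (F : Representation.IntertwiningMap V.ρ V.ρ) => F v) hc.symm

lemma classfun_zero (f : G → ℂ) (hf : ∀ g h, f (h * g * h⁻¹) = f g)
    (h0 : ∀ (V : FDRep ℂ G), Simple V → ∑ g, f g * V.character g⁻¹ = 0) (g : G) : f g = 0 := by
  classical
  let Z : ∀ {V : Type} [AddCommGroup V] [Module ℂ V], Representation ℂ G V → Module.End ℂ V :=
    fun ρ => ∑ g, f g • ρ g⁻¹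
  have hcomm : ∀ {V : Type} [AddCommGroup V] [Module ℂ V] (ρ : Representation ℂ G V) h,
      ρ h * Z ρ = Z ρ * ρ h := by
    intro V _ _ ρ h
    simp only [Z, Finset.mul_sum, Finset.sum_mul]
    refine Fintype.sum_equiv (MulAut.conj h).toEquiv _ _ (fun g => ?_)
    simp only [MulEquiv.toEquiv_eq_coe, MulEquiv.coe_toEquiv, MulAut.conj_apply, hf, mul_smul_comm,
      smul_mul_assoc, ← map_mul]
    congr 2
    group
  have hsc : ∀ {V : Type} [AddCommGroup V] [Module ℂ V] [FiniteDimensional ℂ V] [Nontrivial V]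
      (ρ : Representation ℂ G V), Sc ρ → Z ρ = 0 := by
    intro V _ _ _ _ ρ hρ
    obtain ⟨c, hc⟩ := hρ (Z ρ) (hcomm ρ)
    have h1 := h0 _ (simple_of_sc ρ hρ)
    have h2 := congrArg (LinearMap.trace ℂ V) hc
    have h3 : LinearMap.trace ℂ V (Z ρ) = 0 := by
      rw [← h1]
      simp only [Z, map_sum, map_smul, smul_eq_mul]
      rfl
    rw [h3, map_smul, LinearMap.trace_one] at h2
    have h5 : (Module.finrank ℂ V : ℂ) ≠ 0 := by exact_mod_cast Module.finrank_pos.ne'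
    have h4 : c = 0 := by simpa [h5] using h2.symm
    rw [hc, h4, zero_smul]
  have hall : ∀ {V : Type} [AddCommGroup V] [Module ℂ V] [FiniteDimensional ℂ V]
      (ρ : Representation ℂ G V), Z ρ = 0 := by
    intro V _ _ _ ρ
    by_contra hne
    let q : Subrepresentation ρ := ⟨LinearMap.range (Z ρ), by
      rintro g _ ⟨v, rfl⟩
      exact ⟨ρ g v, (LinearMap.congr_fun (hcomm ρ g) v).symm⟩⟩
    obtain ⟨w, hwq, hnt, hs, P, hP, hPw, hPid⟩ := exists_atom ρ q (by
      intro h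
      exact hne (LinearMap.range_eq_bot.mp (congrArg Subrepresentation.toSubmodule h)))
    obtain ⟨x, hx⟩ := exists_ne (0 : w.toSubmodule)
    obtain ⟨u, hu⟩ : (x : V) ∈ LinearMap.range (Z ρ) := hwq x.2
    have hzw := hsc w.toRepresentation hs
    have hPZ : Z ρ * P = P * Z ρ := by
      simp only [Z, Finset.mul_sum, Finset.sum_mul, smul_mul_assoc, mul_smul_comm, hP]
    have h1 : P (Z ρ u) = Z ρ (P u) := (LinearMap.congr_fun hPZ u).symm
    have h2 : Z ρ (P u) = 0 := by
      have := congrArg Subtype.val (LinearMap.congr_fun hzw ⟨P u, hPw u⟩)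
      simp only [Z, LinearMap.sum_apply, LinearMap.smul_apply, LinearMap.zero_apply] at this ⊢
      rw [Submodule.coe_sum] at this
      exact this
    rw [hu, hPid x x.2, h2] at h1
    exact hx (Subtype.ext h1)
  let reg : Representation ℂ G (G → ℂ) :=
    { toFun := fun h =>
        { toFun := fun φ x => φ (x * h)
          map_add' := fun _ _ => rfl
          map_smul' := fun _ _ => rfl }
      map_one' := by
        ext φ x
        simp
      map_mul' := fun a b => by
        refine LinearMap.ext fun φ => funext fun x => ?_
        show φ (x * (a * b)) = φ (x * a * b)
        rw [mul_assoc] }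
  have hreg := LinearMap.congr_fun (hall reg) (Pi.single 1 1)
  have h6 := congrFun hreg g
  simp only [Z, LinearMap.sum_apply, LinearMap.smul_apply, Finset.sum_apply, Pi.smul_apply,
    LinearMap.zero_apply, Pi.zero_apply, smul_eq_mul] at h6
  have h7 : ∀ x, reg x⁻¹ (Pi.single 1 1) g = if g = x then (1 : ℂ) else 0 := by
    intro x
    show (Pi.single 1 1 : G → ℂ) (g * x⁻¹) = _
    rw [Pi.single_apply]
    simp only [mul_inv_eq_one]
  simpa [h7] using h6

end Final

theorem char_sum_eq_card_absolute_square_roots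
    (r n : ℕ) [NeZero r] (hn : 0 < n)
    {ι : Type} [Fintype ι] (V : ι → FDRep ℂ (Wreath r n))
    (hV : IsCompleteIrrFamily V) (g : Wreath r n) :
    ∑ i, (V i).character g =
      (Nat.card {v : Wreath r n // v * Wreath.bar v = g} : ℂ) := by
  classical
  obtain ⟨hV1, hV2, hV3⟩ := hV
  have hinv : Invertible (Nat.card (Wreath r n) : ℂ) := invertibleOfNonzero (by simp)
  let R : Wreath r n → ℂ := fun g => (Nat.card {v : Wreath r n // v * Wreath.bar v = g} : ℂ)
  have hR : ∀ g h, R (h * g * h⁻¹) = R g := by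
    intro g h
    simp only [R]
    congr 1
    symm
    refine Nat.card_congr (Equiv.subtypeEquiv
      ((Equiv.mulLeft h).trans (Equiv.mulRight (Wreath.bar h)⁻¹)) (fun v => ?_))
    simp only [Equiv.trans_apply, Equiv.coe_mulLeft, Equiv.coe_mulRight, Wreath.bar_mul,
      Wreath.bar_inv, Wreath.bar_bar]
    have : h * v * (Wreath.bar h)⁻¹ * (Wreath.bar h * Wreath.bar v * h⁻¹) =
      h * (v * Wreath.bar v) * h⁻¹ := by group
    rw [this]
    simp
  have hRsum : ∀ φ : Wreath r n → ℂ, ∑ g, R g * φ g = ∑ v : Wreath r n, φ (v * Wreath.bar v) := by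
    intro φ
    rw [← Finset.sum_fiberwise Finset.univ (fun v : Wreath r n => v * Wreath.bar v)
      (fun v => φ (v * Wreath.bar v))]
    refine Finset.sum_congr rfl fun g _ => ?_
    rw [Finset.sum_congr rfl (g := fun _ => φ g) (fun v hv => by rw [(Finset.mem_filter.mp hv).2])]
    simp only [R, Finset.sum_const, nsmul_eq_mul]
    rw [Nat.card_eq_fintype_card, Fintype.card_subtype]
  have key := classfun_zero (fun g => ∑ i, (V i).character g - R g)
    (fun g h => by simp only [hR, FDRep.char_conj]) ?_ g
  · exact sub_eq_zero.mp key
  intro W hW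
  obtain ⟨i, ⟨e⟩⟩ := hV3 W hW
  have hcard : (Nat.card (Wreath r n) : ℂ) ≠ 0 := by simp
  have h1 : ∀ j, ∑ g, (V j).character g * W.character g⁻¹ =
      if j = i then (Nat.card (Wreath r n) : ℂ) else 0 := by
    intro j
    have := hV1 j
    have := hV1 i
    have ho := FDRep.char_orthonormal (V j) (V i)
    rw [FDRep.char_iso e, inv_mul_eq_iff_eq_mul₀ hcard] at ho
    rw [ho]
    by_cases hji : j = i
    · subst hji
      rw [if_pos ⟨Iso.refl _⟩, if_pos rfl, mul_one]
    · rw [if_neg (fun h => hji (hV2 _ _ h)), if_neg hji, mul_zero]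
  have h2 : ∑ g, R g * W.character g⁻¹ = (Nat.card (Wreath r n) : ℂ) := by
    rw [hRsum (fun g => W.character g⁻¹)]
    obtain ⟨hs, hnt⟩ := sc_of_simple W hW
    have := indicator_of_PP (Wreath.barAut (r := r) (n := n)).toMonoidHom Wreath.bar_bar
      (Wreath.PP_Wreath hn) (fun g => by
        obtain ⟨h, hh, -⟩ := Wreath.exists_conj g ⟨0, hn⟩
        exact ⟨h, hh⟩) W.ρ hs
    rw [Nat.card_eq_fintype_card, ← this]
    refine Fintype.sum_equiv (Equiv.inv _) _ _ (fun v => ?_)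
    show W.character _ = W.character (Wreath.bar v⁻¹ * v⁻¹)
    rw [mul_inv_rev, Wreath.bar_inv]
  simp only [sub_mul, Finset.sum_sub_distrib, h2, Finset.sum_mul]
  rw [Finset.sum_comm]
  simp [h1]
end

section
/- Let r be odd. The map ρ sending π ∈ G(r,n) to the linear endomorphism of V_{r,n} defined by ρ(π)C_w := sign_o(π,w) · C_{π w πᵗ} (for w ∈ I_{r,n}) is a group homomorphism into GL(V_{r,n}), and for every π ∈ G(r,n) the trace of ρ(π) equals ∑_{χ ∈ Irr(G(r,n))} χ(π); i.e. ρ is a Gelfand model for G(r,n), equivalent to the multiplicity-free direct sum of all irreducible complex representations of G(r,n). -/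
open Finset CategoryTheory

/-- `I_{r,n}`: the set of absolute involutions in `G(r,n)`, i.e. elements `w` with
`w · w̄ = id`. -/
def AbsInv (r n : ℕ) : Type := {w : Wreath r n // w * Wreath.bar w = 1}

instance (r n : ℕ) : DecidableEq (AbsInv r n) :=
  inferInstanceAs (DecidableEq {w : Wreath r n // w * Wreath.bar w = 1})

instance (r n : ℕ) [NeZero r] : Fintype (AbsInv r n) :=
  inferInstanceAs (Fintype {w : Wreath r n // w * Wreath.bar w = 1})

/-- The conjugation action `w ↦ π w πᵗ` on absolute involutions. -/
def conjAbs {r n : ℕ} (π : Wreath r n) (w : AbsInv r n) : AbsInv r n :=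
  ⟨π * w.1 * Wreath.tr π, Wreath.conj_absInv w.2 π⟩


section RepPart
open TensorProduct

theorem gm_trace_comm {V : Type} [AddCommGroup V] [Module ℂ V] [FiniteDimensional ℂ V]
    (A B : V →ₗ[ℂ] V) :
    LinearMap.trace ℂ (V ⊗[ℂ] V) ((TensorProduct.comm ℂ V V).toLinearMap ∘ₗ TensorProduct.map A B)
      = LinearMap.trace ℂ V (A ∘ₗ B) := by
  classical
  let b := Module.finBasis ℂ V
  rw [LinearMap.trace_eq_matrix_trace ℂ (b.tensorProduct b),
    LinearMap.trace_eq_matrix_trace ℂ b, LinearMap.toMatrix_comp b b b, Matrix.trace, Matrix.trace,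
    Fintype.sum_prod_type]
  simp [LinearMap.toMatrix_apply, Matrix.mul_apply, Module.Basis.tensorProduct_apply]
  exact Finset.sum_comm

theorem gm_fs {G : Type} [Group G] [Fintype G] (bar : G ≃* G) (hbar : ∀ g, bar (bar g) = g)
    (hconj : ∀ g, ∃ h, h * g * h⁻¹ = (bar g)⁻¹) (V : FDRep ℂ G) [Simple V] :
    ∃ c : ℂ, c ^ 2 = 1 ∧ (Nat.card G : ℂ)⁻¹ * ∑ v, V.character (v * bar v) = c := by
  classical
  have hne : (Nat.card G : ℂ) ≠ 0 := by simp
  have : Invertible (Nat.card G : ℂ) := invertibleOfNonzero hne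
  have : Invertible (Fintype.card G : ℂ) := by rw [Fintype.card_eq_nat_card]; infer_instance
  let ρ : Representation ℂ G V := V.ρ
  let ρ' : Representation ℂ G V := ρ.comp bar.toMonoidHom
  let R := Representation.tprod ρ ρ'
  have hchi : ∀ g, V.character (bar g) = V.character g⁻¹ := by
    intro g
    obtain ⟨h, hh⟩ := hconj g⁻¹
    rw [← FDRep.char_conj V g⁻¹ h, hh]; simp
  have hfr : Module.finrank ℂ (Representation.invariants R) = 1 := by
    have h1 := Representation.card_inv_mul_sum_char_eq_finrank R
    have h2 := FDRep.char_orthonormal V V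
    rw [if_pos ⟨Iso.refl V⟩] at h2
    have h3 : ∀ g, R.character g = V.character g * V.character g⁻¹ := by
      intro g
      rw [← hchi, Representation.char_tensor]
      rfl
    simp_rw [h3] at h1
    rw [h2] at h1
    exact_mod_cast h1.symm
  have hproj := R.isProj_averageMap
  let s := (TensorProduct.comm ℂ V V).toLinearMap
  have hs2 : ∀ x, s (s x) = x := fun x => by
    exact (TensorProduct.comm ℂ V V).symm_apply_apply x
  have hsR : ∀ g x, s (R g x) = R (bar g) (s x) := by
    intro g x
    induction x using TensorProduct.induction_on with
    | zero => simp
    | add x y hx hy => simp only [map_add, hx, hy]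
    | tmul x y => 
      show s (ρ g x ⊗ₜ ρ (bar g) y) = ρ (bar g) y ⊗ₜ ρ (bar (bar g)) x
      rw [hbar]; rfl
  have hsinv : ∀ x ∈ R.invariants, s x ∈ R.invariants := by
    intro x hx g
    have := hsR (bar g) x
    rw [hx (bar g), hbar] at this
    exact this.symm
  obtain ⟨⟨x, hx⟩, hx0, hspan⟩ := finrank_eq_one_iff'.mp hfr
  obtain ⟨c, hc⟩ := hspan ⟨s x, hsinv x hx⟩
  have hc' : c • x = s x := congrArg Subtype.val hc
  have hx0' : x ≠ 0 := fun h => hx0 (Subtype.ext h)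
  have hcc : c ^ 2 = 1 := by
    have h1 : s (s x) = c • c • x := by rw [← hc', map_smul, ← hc']
    rw [hs2, smul_smul] at h1
    have h2 : (c * c - 1) • x = 0 := by rw [sub_smul, ← h1, one_smul, sub_self]
    have := (smul_eq_zero.mp h2).resolve_right hx0'
    linear_combination this
  refine ⟨c, hcc, ?_⟩
  have hsP : s ∘ₗ R.averageMap = c • R.averageMap := by
    ext1
    refine LinearMap.ext fun y => LinearMap.ext fun z => ?_
    simp only [AlgebraTensorModule.curry_apply, curry_apply, LinearMap.coe_restrictScalars, LinearMap.comp_apply, LinearMap.smul_apply]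
    obtain ⟨a, ha⟩ := hspan ⟨_, hproj.map_mem (y ⊗ₜ z)⟩
    have ha' : a • x = _ := congrArg Subtype.val ha
    simp only at ha'
    rw [← ha', map_smul, ← hc', smul_comm]
  have htr := congrArg (LinearMap.trace ℂ _) hsP
  rw [map_smul, hproj.trace, hfr] at htr
  rw [show (R.averageMap) = (Nat.card G : ℂ)⁻¹ • ∑ g, R g by
    simp [Representation.averageMap, GroupAlgebra.average, map_sum]] at htr
  rw [LinearMap.comp_smul, map_smul, show s ∘ₗ (∑ g, R g) = ∑ g, s ∘ₗ R g from
    LinearMap.ext fun y => by simp [LinearMap.sum_apply], map_sum] at htr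
  have h4 : ∀ g, LinearMap.trace ℂ _ (s ∘ₗ R g) = V.character (g * bar g) := by
    intro g
    have := gm_trace_comm (ρ g) (ρ' g)
    refine this.trans ?_
    rw [FDRep.character, map_mul]; rfl
  simp only [h4] at htr
  simpa using htr

theorem gm_trace_compl {U : Type} [AddCommGroup U] [Module ℂ U] [FiniteDimensional ℂ U]
    (f : U →ₗ[ℂ] U) (p q : Submodule ℂ U) (h : IsCompl p q) (hp : ∀ x ∈ p, f x ∈ p)
    (hq : ∀ x ∈ q, f x ∈ q) :
    LinearMap.trace ℂ U f = LinearMap.trace ℂ p (f.restrict hp) + LinearMap.trace ℂ q (f.restrict hq) := by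
  classical
  let e := Submodule.prodEquivOfIsCompl p q h
  rw [← LinearMap.trace_prodMap', ← LinearMap.trace_conj' _ e]
  congr 1
  ext x
  obtain ⟨⟨a, b⟩, rfl⟩ := e.surjective x
  simp [LinearEquiv.conj_apply, e]

theorem gm_simple {G : Type} [Group G] [Fintype G] {U : Type} [AddCommGroup U] [Module ℂ U] [FiniteDimensional ℂ U]
    (ρ : Representation ℂ G U) [hi : ρ.IsIrreducible] : Simple (FDRep.of ρ) := by
  classical
  have hne : (Nat.card G : ℂ) ≠ 0 := by simp
  have : Invertible (Nat.card G : ℂ) := invertibleOfNonzero hne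
  rw [FDRep.simple_iff_char_is_norm_one]
  have := Representation.char_orthonormal ρ ρ
  rw [if_pos ⟨Representation.Equiv.refl _⟩] at this
  rw [inv_mul_eq_iff_eq_mul₀ hne, mul_one] at this
  exact this

theorem gm_decomp {G : Type} [Group G] [Fintype G] {ι : Type} [Fintype ι] (V : ι → FDRep ℂ G)
    (hV : IsCompleteIrrFamily V) : ∀ (d : ℕ) (U : Type) [AddCommGroup U] [Module ℂ U] 
    [FiniteDimensional ℂ U] (ρ : Representation ℂ G U), Module.finrank ℂ U = d →
    ∃ m : ι → ℕ, ∀ g, LinearMap.trace ℂ U (ρ g) = ∑ i, (m i : ℂ) * (V i).character g := by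
  classical
  intro d
  induction d using Nat.strong_induction_on with
  | _ d ih =>
  intro U _ _ _ ρ hd
  by_cases h0 : Subsingleton U
  · refine ⟨0, fun g => ?_⟩
    rw [show ρ g = 0 from Subsingleton.elim _ _]; simp
  by_cases hi : ρ.IsIrreducible
  · obtain ⟨i, ⟨e⟩⟩ := hV.2.2 (FDRep.of ρ) (gm_simple ρ)
    refine ⟨fun j => if j = i then 1 else 0, fun g => ?_⟩
    have := congrFun (FDRep.char_iso e) g
    simp [this]
    rfl
  · have hne : (Nat.card G : ℂ) ≠ 0 := by simp
    have : NeZero (Nat.card G : ℂ) := ⟨hne⟩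
    have : Nontrivial U := not_subsingleton_iff_nontrivial.mp h0
    obtain ⟨p, hp0, hp1⟩ : ∃ p : Subrepresentation ρ, p ≠ ⊥ ∧ p ≠ ⊤ := by
      by_contra hcon
      push Not at hcon
      apply hi
      have : Nontrivial (Subrepresentation ρ) := ⟨⊥, ⊤, fun h => by
        have : (⊥ : Submodule ℂ U) = ⊤ := congrArg Subrepresentation.toSubmodule h
        exact bot_ne_top this⟩
      exact ⟨fun a => by by_cases h : a = ⊥; exact Or.inl h; exact Or.inr (hcon a h)⟩
    have : Representation.IsSemisimpleRepresentation ρ := inferInstance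
    obtain ⟨q, hq⟩ := exists_isCompl p
    have hpq : IsCompl p.toSubmodule q.toSubmodule := by
      constructor
      · rw [disjoint_iff, ← Subrepresentation.toSubmodule_inf, hq.inf_eq_bot]; rfl
      · rw [codisjoint_iff, ← Subrepresentation.toSubmodule_sup, hq.sup_eq_top]; rfl
    have hsum := Submodule.finrank_add_eq_of_isCompl hpq
    have hpp : 0 < Module.finrank ℂ p.toSubmodule := by
      rw [Nat.pos_iff_ne_zero]
      intro h
      rw [Submodule.finrank_eq_zero] at h
      exact hp0 (Subrepresentation.toSubmodule_injective h)
    have hpl : Module.finrank ℂ p.toSubmodule < Module.finrank ℂ U := by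
      apply Submodule.finrank_lt
      intro h
      exact hp1 (Subrepresentation.toSubmodule_injective h)
    obtain ⟨m1, h1⟩ := ih _ (by omega) p.toSubmodule p.toRepresentation rfl
    obtain ⟨m2, h2⟩ := ih (Module.finrank ℂ q.toSubmodule) (by omega) q.toSubmodule q.toRepresentation rfl
    refine ⟨m1 + m2, fun g => ?_⟩
    rw [gm_trace_compl (ρ g) _ _ hpq (p.apply_mem_toSubmodule g) (q.apply_mem_toSubmodule g)]
    refine (congrArg₂ _ (h1 g) (h2 g)).trans ?_
    simp [add_mul, Finset.sum_add_distrib]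

theorem gm_main1 {G : Type} [Group G] [Fintype G] [DecidableEq G] (bar : G ≃* G)
    (hbar : ∀ g, bar (bar g) = g)
    (hconj : ∀ g, ∃ h, h * g * h⁻¹ = (bar g)⁻¹) {ι : Type} [Fintype ι] (V : ι → FDRep ℂ G)
    (hV : IsCompleteIrrFamily V) {U : Type} [AddCommGroup U] [Module ℂ U] 
    [FiniteDimensional ℂ U] (ρ : Representation ℂ G U)
    (hρ : ∀ g, LinearMap.trace ℂ U (ρ g) = ((univ.filter fun v => v * bar v = g).card : ℂ)) (g : G) :
    LinearMap.trace ℂ U (ρ g) = ∑ i, (V i).character g := by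
  classical
  have hne : (Nat.card G : ℂ) ≠ 0 := by simp
  have : Invertible (Nat.card G : ℂ) := invertibleOfNonzero hne
  obtain ⟨m, hm⟩ := gm_decomp V hV _ U ρ rfl
  rw [hm]
  refine Finset.sum_congr rfl fun j _ => ?_
  have := hV.1
  suffices h : m j = 1 by simp [h]
  have e1 : (Nat.card G : ℂ)⁻¹ * ∑ g, LinearMap.trace ℂ U (ρ g) * (V j).character g⁻¹ = m j := by
    simp_rw [hm, Finset.sum_mul, mul_assoc]
    rw [Finset.sum_comm]
    simp_rw [← Finset.mul_sum]
    have : ∀ i, (Nat.card G : ℂ)⁻¹ * ((m i : ℂ) * ∑ g, (V i).character g * (V j).character g⁻¹)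
        = if i = j then (m i : ℂ) else 0 := by
      intro i
      have := FDRep.char_orthonormal (V i) (V j)
      rw [mul_left_comm, this]
      by_cases hij : i = j
      · subst hij; rw [if_pos ⟨Iso.refl _⟩]; simp
      · rw [if_neg (fun h => hij (hV.2.1 _ _ h)), if_neg hij]; simp
    rw [Finset.mul_sum, Finset.sum_congr rfl fun i _ => this i]
    simp
  have e2 : ∑ g, LinearMap.trace ℂ U (ρ g) * (V j).character g⁻¹ = ∑ v, (V j).character (v * bar v) := by
    have h1 : ∀ g, LinearMap.trace ℂ U (ρ g) * (V j).character g⁻¹ 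
        = ∑ v, if v * bar v = g then (V j).character (v * bar v)⁻¹ else 0 := by
      intro g
      rw [hρ, ← Finset.sum_filter, ← nsmul_eq_mul, ← Finset.sum_const]
      refine Finset.sum_congr rfl fun v hv => ?_
      rw [(Finset.mem_filter.mp hv).2]
    simp_rw [h1]
    rw [Finset.sum_comm]
    simp only [Finset.sum_ite_eq, Finset.mem_univ, if_true]
    refine Fintype.sum_equiv ((Equiv.inv G).trans bar.toEquiv) _ _ fun v => ?_
    simp [hbar]
  obtain ⟨c, hc, hc2⟩ := gm_fs bar hbar hconj (V j)
  rw [e2, hc2] at e1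
  rw [e1] at hc
  have : (m j) ^ 2 = 1 := by exact_mod_cast hc
  simpa using this
end RepPart

section CombPart

theorem gm_transv {α M : Type} [Fintype α] [DecidableEq α] [CommMonoid M] (u : Equiv.Perm α)
    (hu : ∀ x, u (u x) = x) (f : α → M) (hf : ∀ x, f (u x) = f x) (P Q : α → Prop)
    [DecidablePred P] [DecidablePred Q] (hP : ∀ x, P x → ¬ P (u x)) (hQ : ∀ x, Q x → ¬ Q (u x))
    (hPQ : ∀ x, (P x ∨ P (u x)) ↔ (Q x ∨ Q (u x))) :
    ∏ x ∈ univ.filter P, f x = ∏ x ∈ univ.filter Q, f x := by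
  rw [← Finset.prod_filter_mul_prod_filter_not (univ.filter P) Q,
    ← Finset.prod_filter_mul_prod_filter_not (univ.filter Q) P]
  simp only [Finset.filter_filter]
  congr 1
  · refine Finset.prod_congr ?_ fun _ _ => rfl
    ext x; simp [and_comm]
  · refine Finset.prod_bij (fun x _ => u x) ?_ ?_ ?_ ?_
    · intro x hx
      simp only [mem_filter, mem_univ, true_and] at hx ⊢
      exact ⟨((hPQ x).1 (Or.inl hx.1)).resolve_left hx.2, hP x hx.1⟩
    · intro x _ y _ h; exact u.injective h
    · intro x hx
      simp only [mem_filter, mem_univ, true_and] at hx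
      refine ⟨u x, ?_, hu x⟩
      simp only [mem_filter, mem_univ, true_and]
      exact ⟨((hPQ x).2 (Or.inl hx.1)).resolve_left hx.2, hQ x hx.1⟩
    · intro x _; exact (hf x).symm

variable {n : ℕ}

/-- the sign as a product -/
def gmSg (σ u : Equiv.Perm (Fin n)) : ℤ :=
  ∏ x ∈ univ.filter (fun x => x < u x), if σ (u x) < σ x then (-1 : ℤ) else 1

theorem gm_signO {r : ℕ} (π w : Wreath r n) (hw : ∀ x, w.1 (w.1 x) = x) :
    signO π w = gmSg π.1 w.1 := by
  unfold signO gmSg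
  rw [Finset.prod_ite]
  simp only [Finset.prod_const, one_pow, mul_one]
  congr 1
  refine Finset.card_bij (fun p _ => p.1) ?_ ?_ ?_
  · rintro ⟨a, b⟩ h
    simp only [invPairs, pairSet, mem_inter, mem_filter, mem_univ, true_and] at h ⊢
    obtain ⟨⟨h1, h2⟩, _, h3, h4⟩ := h
    subst h3
    exact ⟨h1, h2⟩
  · rintro ⟨a, b⟩ h ⟨a', b'⟩ h' e
    simp only [invPairs, pairSet, mem_inter, mem_filter, mem_univ, true_and] at h h' e
    subst e
    rw [← h.2.2.1, ← h'.2.2.1]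
  · intro x hx
    simp only [mem_filter, mem_univ, true_and] at hx
    refine ⟨(x, w.1 x), ?_, rfl⟩
    simp only [invPairs, pairSet, mem_inter, mem_filter, mem_univ, true_and]
    exact ⟨hx, hx.1, hw x⟩

theorem gm_cocycle (a b u : Equiv.Perm (Fin n)) (hu : ∀ x, u (u x) = x) :
    gmSg (a * b) u = gmSg a (b * u * b⁻¹) * gmSg b u := by
  have h1 : gmSg a (b * u * b⁻¹) = ∏ x ∈ univ.filter (fun x => b x < b (u x)),
      if a (b (u x)) < a (b x) then (-1 : ℤ) else 1 := by
    unfold gmSg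
    symm
    refine Finset.prod_bij (fun x _ => b x) ?_ ?_ ?_ ?_
    · intro x hx
      simp only [mem_filter, mem_univ, true_and] at hx ⊢
      simpa using hx
    · intro x _ y _ h; exact b.injective h
    · intro x hx
      refine ⟨b⁻¹ x, ?_, by simp⟩
      simp only [mem_filter, mem_univ, true_and] at hx ⊢
      simpa using hx
    · intro x _; simp
  let f : Fin n → ℤ := fun x => if (b x < b (u x) ↔ a (b x) < a (b (u x))) then 1 else -1
  have hf : ∀ x, f (u x) = f x := by
    intro x
    simp only [f, hu]
    by_cases hx : u x = x
    · simp [hx]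
    · have e1 : b (u x) ≠ b x := fun h => hx (b.injective h)
      have e2 : a (b (u x)) ≠ a (b x) := fun h => e1 (a.injective h)
      congr 1
      rw [eq_iff_iff]
      constructor <;> intro h <;> constructor <;> intro h' <;> by_contra hc <;> grind
  have h2 := gm_transv u hu f hf (fun x => b x < b (u x)) (fun x => x < u x)
    (by intro x h; rw [hu]; exact not_lt_of_gt h) (by intro x h; rw [hu]; exact not_lt_of_gt h)
    (by
      intro x
      rw [hu]
      have : (u x = x) ↔ (b (u x) = b x) := ⟨fun h => by rw [h], fun h => b.injective h⟩
      by_cases h : u x = x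
      · simp [h]
      · have h' := mt this.2 h
        constructor <;> intro _
        · exact lt_or_gt_of_ne (Ne.symm h)
        · exact lt_or_gt_of_ne (Ne.symm h'))
  rw [h1]
  have h3 : ∏ x ∈ univ.filter (fun x => b x < b (u x)),
      (if a (b (u x)) < a (b x) then (-1 : ℤ) else 1) = ∏ x ∈ univ.filter (fun x => b x < b (u x)), f x := by
    refine Finset.prod_congr rfl fun x hx => ?_
    simp only [mem_filter, mem_univ, true_and] at hx
    have e2 : a (b (u x)) ≠ a (b x) := fun h => hx.ne (a.injective h).symm
    simp only [f, hx, true_iff]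
    grind
  rw [h3, h2, gmSg, gmSg, ← Finset.prod_mul_distrib]
  refine Finset.prod_congr rfl fun x hx => ?_
  simp only [mem_filter, mem_univ, true_and] at hx
  have e1 : b (u x) ≠ b x := fun h => hx.ne (b.injective h).symm
  have e2 : a (b (u x)) ≠ a (b x) := fun h => e1 (a.injective h)
  simp only [f, Equiv.Perm.mul_apply]
  grind

/-- representative of the cycle -/
noncomputable def gmRep (σ : Equiv.Perm (Fin n)) (x : Fin n) : Fin n :=
  (Quotient.mk (Equiv.Perm.SameCycle.setoid σ) x).out

theorem gm_rep_iff (σ : Equiv.Perm (Fin n)) (x y : Fin n) :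
    gmRep σ x = gmRep σ y ↔ ∃ i : ℤ, (σ ^ i) x = y := by
  unfold gmRep
  rw [Quotient.out_inj, Quotient.eq]
  rfl

theorem gm_rep_zpow (σ : Equiv.Perm (Fin n)) (x : Fin n) (i : ℤ) :
    gmRep σ ((σ ^ i) x) = gmRep σ x := 
  ((gm_rep_iff σ _ _).2 ⟨i, rfl⟩).symm

theorem gm_rep_rep (σ : Equiv.Perm (Fin n)) (x : Fin n) : gmRep σ (gmRep σ x) = gmRep σ x := by
  unfold gmRep
  rw [Quotient.out_eq]

/-- cycle length -/
noncomputable def gmD (σ : Equiv.Perm (Fin n)) (x : Fin n) : ℕ :=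
  Function.minimalPeriod (fun y => σ • y) x

theorem gm_D_iff (σ : Equiv.Perm (Fin n)) (x : Fin n) (i : ℤ) :
    (σ ^ i) x = x ↔ (gmD σ x : ℤ) ∣ i :=
  MulAction.zpow_smul_eq_iff_minimalPeriod_dvd (a := σ) (b := x) (n := i)

theorem gm_zpow_eq (σ : Equiv.Perm (Fin n)) (x : Fin n) (i j : ℤ) :
    (σ ^ i) x = (σ ^ j) x ↔ (gmD σ x : ℤ) ∣ i - j := by
  rw [← gm_D_iff, sub_eq_neg_add, zpow_add, zpow_neg, Equiv.Perm.mul_apply, Equiv.Perm.inv_eq_iff_eq]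
  
theorem gm_D_pos (σ : Equiv.Perm (Fin n)) (x : Fin n) : 0 < gmD σ x := by
  rw [Nat.pos_iff_ne_zero]
  intro h
  have h2 := (gm_D_iff σ x (orderOf σ)).1 (by rw [zpow_natCast, pow_orderOf_eq_one]; rfl)
  rw [h] at h2
  have := orderOf_pos σ
  rw [Nat.cast_zero, zero_dvd_iff] at h2
  omega

theorem gm_D_congr (σ : Equiv.Perm (Fin n)) (x y : Fin n) (h : gmRep σ x = gmRep σ y) :
    gmD σ x = gmD σ y := by
  obtain ⟨i, rfl⟩ := (gm_rep_iff σ x y).1 h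
  have : ∀ j : ℤ, (gmD σ x : ℤ) ∣ j ↔ (gmD σ ((σ ^ i) x) : ℤ) ∣ j := by
    intro j
    rw [← gm_D_iff, ← gm_D_iff, ← Equiv.Perm.mul_apply, ← zpow_add, add_comm, zpow_add,
      Equiv.Perm.mul_apply, (σ ^ i).injective.eq_iff]
  exact Nat.dvd_antisymm (by exact_mod_cast (this _).2 dvd_rfl) (by exact_mod_cast (this _).1 dvd_rfl)

/-- shift each cycle -/
noncomputable def gmShift (σ : Equiv.Perm (Fin n)) (e : Fin n → ℤ) : Equiv.Perm (Fin n) where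
  toFun x := (σ ^ e (gmRep σ x)) x
  invFun x := (σ ^ (-e (gmRep σ x))) x
  left_inv x := by simp [gm_rep_zpow]
  right_inv x := by
    simp only [gm_rep_zpow]
    simp

theorem gm_shift_apply (σ : Equiv.Perm (Fin n)) (e : Fin n → ℤ)
    (he : ∀ x y, gmRep σ x = gmRep σ y → e x = e y) (x : Fin n) : gmShift σ e x = (σ ^ e x) x := by
  show (σ ^ e (gmRep σ x)) x = _
  rw [he _ x (gm_rep_rep σ x)]

theorem gm_comm_zpow (σ u : Equiv.Perm (Fin n)) (h : u * σ = σ * u) (i : ℤ) (x : Fin n) :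
    u ((σ ^ i) x) = (σ ^ i) (u x) := by
  have : Commute u σ := h
  exact congrArg (fun f : Equiv.Perm (Fin n) => f x) (this.zpow_right i)

theorem gm_rep_comm (σ u : Equiv.Perm (Fin n)) (h : u * σ = σ * u) (x y : Fin n) 
    (hxy : gmRep σ x = gmRep σ y) : gmRep σ (u x) = gmRep σ (u y) := by
  obtain ⟨i, rfl⟩ := (gm_rep_iff σ x y).1 hxy
  rw [gm_comm_zpow σ u h, gm_rep_zpow]

theorem gm_sg_split (σ u : Equiv.Perm (Fin n)) (C : Fin n → Prop) [DecidablePred C] :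
    gmSg σ u = (∏ x ∈ univ.filter (fun x => C x ∧ x < u x), if σ (u x) < σ x then (-1 : ℤ) else 1) *
      ∏ x ∈ univ.filter (fun x => ¬ C x ∧ x < u x), if σ (u x) < σ x then (-1 : ℤ) else 1 := by
  unfold gmSg
  rw [← Finset.prod_filter_mul_prod_filter_not _ C]
  simp only [Finset.filter_filter, and_comm]

theorem gm_telescope (o : ℕ → ℤ) (ho : ∀ j, o j * o j = 1) (k : ℕ) :
    ∏ j ∈ range k, o j * o (j + 1) = o 0 * o k := by
  induction k with
  | zero => simp [ho]
  | succ k ih => rw [Finset.prod_range_succ, ih]; linear_combination o 0 * o (k+1) * ho k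

theorem gm_sg_eq (σ u : Equiv.Perm (Fin n)) (hc : u * σ = σ * u) (x : Fin n) (hx : x < u x) :
    (if σ (u x) < σ x then (-1 : ℤ) else 1) =
      (if x < u x then 1 else -1) * (if σ x < u (σ x) then 1 else -1) := by
  have h : u (σ x) = σ (u x) := by simpa using gm_comm_zpow σ u hc 1 x
  have : σ (u x) ≠ σ x := fun h => hx.ne (σ.injective h).symm
  rw [h, if_pos hx]
  grind

theorem gm_f_inv (σ u : Equiv.Perm (Fin n)) (hu : ∀ x, u (u x) = x) (hc : u * σ = σ * u) (x : Fin n) :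
    (if u x < u (u x) then (1 : ℤ) else -1) * (if σ (u x) < u (σ (u x)) then 1 else -1) =
      (if x < u x then 1 else -1) * (if σ x < u (σ x) then 1 else -1) := by
  have h : u (σ x) = σ (u x) := by simpa using gm_comm_zpow σ u hc 1 x
  have h' : u (σ (u x)) = σ x := by rw [← h, hu]
  rw [hu, h', h]
  by_cases hx : u x = x
  · rw [hx]
  · have : σ (u x) ≠ σ x := fun h => hx (σ.injective h)
    grind

theorem gm_core (σ u u' : Equiv.Perm (Fin n)) (hu' : ∀ x, u' (u' x) = x)
    (hc' : u' * σ = σ * u') (x0 : Fin n) (k : ℕ) (hk : gmD σ x0 = 2 * k)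
    (h1 : ∀ x, gmRep σ x = gmRep σ x0 → u x = x)
    (h2 : ∀ x, gmRep σ x = gmRep σ x0 → u' x = (σ ^ (k : ℤ)) x)
    (h3 : ∀ x, gmRep σ x ≠ gmRep σ x0 → u' x = u x) :
    gmSg σ u' = - gmSg σ u := by
  classical
  have hk0 : 0 < k := by have := gm_D_pos σ x0; omega
  rw [gm_sg_split σ u' (fun x => gmRep σ x = gmRep σ x0),
    gm_sg_split σ u (fun x => gmRep σ x = gmRep σ x0)]
  have e1 : univ.filter (fun x => gmRep σ x = gmRep σ x0 ∧ x < u x) = ∅ := by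
    ext x; simp only [mem_filter, mem_univ, true_and, notMem_empty, iff_false]
    rintro ⟨h, h'⟩; rw [h1 x h] at h'; exact lt_irrefl _ h'
  rw [e1, Finset.prod_empty, one_mul]
  have e2 : (∏ x ∈ univ.filter (fun x => gmRep σ x ≠ gmRep σ x0 ∧ x < u' x), 
        if σ (u' x) < σ x then (-1 : ℤ) else 1) = 
      ∏ x ∈ univ.filter (fun x => gmRep σ x ≠ gmRep σ x0 ∧ x < u x), 
        if σ (u x) < σ x then (-1 : ℤ) else 1 := by
    refine Finset.prod_congr ?_ ?_
    · ext x; simp only [mem_filter, mem_univ, true_and]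
      refine and_congr_right fun h => by rw [h3 x h]
    · intro x hx; simp only [mem_filter, mem_univ, true_and] at hx
      rw [h3 x hx.1]
  simp only [ne_eq] at e2
  rw [e2]
  suffices h : (∏ x ∈ univ.filter (fun x => gmRep σ x = gmRep σ x0 ∧ x < u' x), 
        if σ (u' x) < σ x then (-1 : ℤ) else 1) = -1 by rw [h]; ring
  let o : Fin n → ℤ := fun x => if x < u' x then 1 else -1
  have ho : ∀ x, o x * o x = 1 := by intro x; simp only [o]; split_ifs <;> norm_num
  have hmem : ∀ i : ℤ, u' ((σ ^ i) x0) = (σ ^ (k + i : ℤ)) x0 := by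
    intro i; rw [h2 _ (gm_rep_zpow _ _ _), ← Equiv.Perm.mul_apply, ← zpow_add]
  have hne : ∀ i : ℤ, u' ((σ ^ i) x0) ≠ (σ ^ i) x0 := by
    intro i; rw [hmem, Ne, gm_zpow_eq, hk]
    rintro ⟨t, ht⟩
    push_cast at ht
    have : (k : ℤ) * (1 - 2 * t) = 0 := by linarith
    rcases mul_eq_zero.1 this with h | h <;> omega
  have e3 : (∏ x ∈ univ.filter (fun x => gmRep σ x = gmRep σ x0 ∧ x < u' x), 
        if σ (u' x) < σ x then (-1 : ℤ) else 1) =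
        ∏ x ∈ univ.filter (fun x => gmRep σ x = gmRep σ x0 ∧ x < u' x), o x * o (σ x) := by
    refine Finset.prod_congr rfl fun x hx => ?_
    simp only [mem_filter, mem_univ, true_and] at hx
    exact gm_sg_eq σ u' hc' x hx.2
  have hrep : ∀ x, gmRep σ (u' x) = gmRep σ x0 ↔ gmRep σ x = gmRep σ x0 := by
    have : ∀ x, gmRep σ x = gmRep σ x0 → gmRep σ (u' x) = gmRep σ x0 := by
      intro x hx; rw [h2 x hx, gm_rep_zpow, hx]
    intro x
    exact ⟨fun h => by have := this _ h; rwa [hu'] at this, this x⟩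
  have hlt : ∀ j i : ℕ, j < k → i < k → (σ ^ (j : ℤ)) x0 ≠ (σ ^ (k + i : ℤ)) x0 := by
    intro j i hj hi
    rw [Ne, gm_zpow_eq, hk]
    rintro ⟨t, ht⟩
    push_cast at ht
    have h1 : (k : ℤ) * (2 * t + 2) > 0 := by nlinarith
    have h2 : (k : ℤ) * (2 * t) < 0 := by nlinarith
    have hk' : (0 : ℤ) < k := by exact_mod_cast hk0
    have := pos_of_mul_pos_right h1 hk'.le
    have := neg_of_mul_neg_right h2 hk'.le
    omega
  rw [e3, gm_transv u' hu' (fun x => o x * o (σ x)) (fun x => gm_f_inv σ u' hu' hc' x) _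
    (fun x => ∃ j : ℕ, j < k ∧ (σ ^ (j : ℤ)) x0 = x)]
  · have : univ.filter (fun x => ∃ j : ℕ, j < k ∧ (σ ^ (j : ℤ)) x0 = x) =
        (range k).image (fun j : ℕ => (σ ^ (j : ℤ)) x0) := by
      ext x; simp
    rw [this, Finset.prod_image]
    · have h := gm_telescope (fun j : ℕ => o ((σ ^ (j : ℤ)) x0)) (fun j => ho _) k
      have h' : ∀ j : ℕ, (σ ^ ((j + 1 : ℕ) : ℤ)) x0 = σ ((σ ^ (j : ℤ)) x0) := by
        intro j
        rw [← Equiv.Perm.mul_apply, ← zpow_one_add]; push_cast; rw [add_comm]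
      simp only [h'] at h
      rw [h]
      have e4 := hmem 0
      have e5 := hne 0
      simp only [zpow_zero, Equiv.Perm.one_apply, add_zero] at e4 e5
      simp only [Nat.cast_zero, zpow_zero, Equiv.Perm.one_apply, ← e4, o, hu']
      grind
    · intro i hi j hj hij
      simp only [coe_range, Set.mem_Iio] at hi hj
      rw [gm_zpow_eq, hk] at hij
      obtain ⟨t, ht⟩ := hij
      push_cast at ht
      have h1 : (k : ℤ) * (2 * t + 1) > 0 := by nlinarith
      have h2 : (k : ℤ) * (2 * t - 1) < 0 := by nlinarith
      have hk' : (0 : ℤ) < k := by exact_mod_cast hk0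
      have := pos_of_mul_pos_right h1 hk'.le
      have := neg_of_mul_neg_right h2 hk'.le
      have : t = 0 := by omega
      subst this
      omega
  · rintro x ⟨_, h⟩ ⟨_, h'⟩
    rw [hu'] at h'
    exact lt_asymm h h'
  · rintro x ⟨j, hj, rfl⟩ ⟨i, hi, h⟩
    rw [hmem] at h
    exact hlt i j hi hj h
  · intro x
    rw [hrep, hu']
    have : ((∃ j : ℕ, j < k ∧ (σ ^ (j : ℤ)) x0 = x) ∨ (∃ j : ℕ, j < k ∧ (σ ^ (j : ℤ)) x0 = u' x)) ↔
        gmRep σ x = gmRep σ x0 := by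
      constructor
      · rintro (⟨j, _, h⟩ | ⟨j, _, h⟩)
        · rw [← h, gm_rep_zpow]
        · rw [← hrep, ← h, gm_rep_zpow]
      · intro h
        obtain ⟨i, rfl⟩ := (gm_rep_iff _ _ _).1 h.symm
        have hk' : (0 : ℤ) < 2 * k := by omega
        have m1 := Int.emod_nonneg i hk'.ne'
        have m2 := Int.emod_lt_of_pos i hk'
        have m3 := Int.emod_add_mul_ediv i (2 * k)
        by_cases hm : i % (2 * k) < k
        · left
          refine ⟨(i % (2 * k)).toNat, by omega, ?_⟩
          rw [gm_zpow_eq, hk, Int.toNat_of_nonneg m1]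
          push_cast
          exact ⟨-(i / (2 * k)), by linarith⟩
        · right
          refine ⟨(i % (2 * k) - k).toNat, by omega, ?_⟩
          rw [hmem, gm_zpow_eq, hk, Int.toNat_of_nonneg (by omega)]
          push_cast
          exact ⟨-(i / (2 * k)) - 1, by linarith⟩
    rw [this]
    constructor
    · rintro (h | h) <;> exact h.1
    · intro h
      obtain ⟨i, rfl⟩ := (gm_rep_iff _ _ _).1 h.symm
      have := hne i
      rcases lt_or_gt_of_ne this with h' | h'
      · exact Or.inr ⟨h, h'⟩
      · exact Or.inl ⟨h, h'⟩

end CombPart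

section CombPart2
variable {n : ℕ}

/-- exponent for the square-root bijection -/
noncomputable def gmE (σ u : Equiv.Perm (Fin n)) (x : Fin n) : ℤ :=
  if gmRep σ (u x) = gmRep σ x then (((gmD σ x + 1) / 2 : ℕ) : ℤ)
  else if gmRep σ x < gmRep σ (u x) then 0 else 1

theorem gm_E_inv (σ u : Equiv.Perm (Fin n)) (hc : u * σ = σ * u) (x y : Fin n)
    (h : gmRep σ x = gmRep σ y) : gmE σ u x = gmE σ u y := by
  unfold gmE
  rw [gm_rep_comm σ u hc x y h, h, gm_D_congr σ x y h]

theorem gm_E_congr (σ u v : Equiv.Perm (Fin n)) (h : ∀ x, gmRep σ (u x) = gmRep σ (v x)) :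
    gmE σ u = gmE σ v := by
  ext x; unfold gmE; rw [h]

theorem gm_E_sum (σ u : Equiv.Perm (Fin n)) (hc : u * σ = σ * u)
    (hr : ∀ x, gmRep σ (u (u x)) = gmRep σ x)
    (ho : ∀ x, gmRep σ (u x) = gmRep σ x → Odd (gmD σ x)) (x : Fin n) :
    (gmD σ x : ℤ) ∣ gmE σ u x + gmE σ u (u x) - 1 := by
  by_cases h : gmRep σ (u x) = gmRep σ x
  · rw [gm_E_inv σ u hc _ _ h]
    unfold gmE
    rw [if_pos h]
    obtain ⟨k, hk⟩ := ho x h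
    have : (gmD σ x + 1) / 2 = k + 1 := by omega
    rw [this, hk]
    exact ⟨1, by push_cast; ring⟩
  · unfold gmE
    rw [hr, if_neg h, if_neg (Ne.symm h)]
    rcases lt_or_gt_of_ne h with h' | h'
    · rw [if_neg (not_lt_of_gt h'), if_pos h']; simp
    · rw [if_pos h', if_neg (not_lt_of_gt h')]; simp

theorem gm_shift_inv (σ : Equiv.Perm (Fin n)) (e : Fin n → ℤ) :
    (gmShift σ e)⁻¹ = gmShift σ (fun x => - e x) := by
  ext x; rfl


theorem gm_v_apply (σ u : Equiv.Perm (Fin n)) (hc : u * σ = σ * u) (e : Fin n → ℤ)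
    (he : ∀ x y, gmRep σ x = gmRep σ y → e x = e y) (x : Fin n) : (u * gmShift σ e) x = (σ ^ e x) (u x) := by
  rw [Equiv.Perm.mul_apply, gm_shift_apply σ e he, gm_comm_zpow σ u hc]

theorem gm_v_rep (σ u : Equiv.Perm (Fin n)) (hc : u * σ = σ * u) (e : Fin n → ℤ)
    (he : ∀ x y, gmRep σ x = gmRep σ y → e x = e y) (x : Fin n) : gmRep σ ((u * gmShift σ e) x) = gmRep σ (u x) := by
  rw [gm_v_apply σ u hc e he, gm_rep_zpow]

theorem gm_v_comm (σ u : Equiv.Perm (Fin n)) (hc : u * σ = σ * u) (e : Fin n → ℤ)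
    (he : ∀ x y, gmRep σ x = gmRep σ y → e x = e y) : (u * gmShift σ e) * σ = σ * (u * gmShift σ e) := by
  ext1 x
  rw [Equiv.Perm.mul_apply, gm_v_apply σ u hc e he, Equiv.Perm.mul_apply σ, gm_v_apply σ u hc e he]
  have h1 := gm_comm_zpow σ u hc 1 x
  have h2 := gm_rep_zpow σ x 1
  rw [zpow_one] at h1 h2
  rw [h1, he _ _ h2]
  exact (gm_comm_zpow σ σ rfl (e x) (u x)).symm

theorem gm_v_sq (σ u : Equiv.Perm (Fin n)) (hc : u * σ = σ * u) (e : Fin n → ℤ)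
    (he : ∀ x y, gmRep σ x = gmRep σ y → e x = e y) (x : Fin n) : (u * gmShift σ e) ((u * gmShift σ e) x) =
    (σ ^ (e x + e (u x))) (u (u x)) := by
  rw [gm_v_apply σ u hc e he, gm_v_apply σ u hc e he, he _ _ (gm_rep_zpow σ (u x) (e x)),
    gm_comm_zpow σ u hc, ← Equiv.Perm.mul_apply, ← zpow_add, add_comm]

theorem gm_sg_one (σ u : Equiv.Perm (Fin n)) (hu : ∀ x, u (u x) = x) (hc : u * σ = σ * u)
    (ho : ∀ x, gmRep σ (u x) = gmRep σ x → Odd (gmD σ x)) : gmSg σ u = 1 := by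
  classical
  have hself : ∀ x, gmRep σ (u x) = gmRep σ x → u x = x := by
    intro x hx
    obtain ⟨i, hi⟩ := (gm_rep_iff _ _ _).1 hx.symm
    have h1 := hu x
    rw [← hi, gm_comm_zpow σ u hc, ← hi, ← Equiv.Perm.mul_apply, ← zpow_add, gm_D_iff] at h1
    rw [← hi, gm_D_iff]
    have hodd : IsCoprime (gmD σ x : ℤ) 2 := by
      obtain ⟨k, hk⟩ := ho x hx
      exact ⟨1, -k, by rw [hk]; push_cast; ring⟩
    rw [← two_mul] at h1
    exact hodd.dvd_of_dvd_mul_left h1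
  let o : Fin n → ℤ := fun x => if x < u x then 1 else -1
  have e3 : gmSg σ u = ∏ x ∈ univ.filter (fun x => x < u x), o x * o (σ x) := by
    refine Finset.prod_congr rfl fun x hx => ?_
    simp only [mem_filter, mem_univ, true_and] at hx
    exact gm_sg_eq σ u hc x hx
  rw [e3, gm_transv u hu (fun x => o x * o (σ x)) (fun x => gm_f_inv σ u hu hc x) _
    (fun x => gmRep σ x < gmRep σ (u x))]
  · rw [Finset.prod_mul_distrib]
    have : ∏ x ∈ univ.filter (fun x => gmRep σ x < gmRep σ (u x)), o (σ x) =
        ∏ x ∈ univ.filter (fun x => gmRep σ x < gmRep σ (u x)), o x := by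
      have hs : ∀ x, gmRep σ (σ x) = gmRep σ x := fun x => by simpa using gm_rep_zpow σ x 1
      have hus : ∀ x, gmRep σ (u (σ x)) = gmRep σ (u x) := fun x => gm_rep_comm σ u hc _ _ (hs x)
      refine Finset.prod_bij (fun x _ => σ x) ?_ ?_ ?_ ?_
      · intro x hx
        simp only [mem_filter, mem_univ, true_and] at hx ⊢
        rwa [hs, hus]
      · intro x _ y _ h; exact σ.injective h
      · intro x hx
        refine ⟨σ⁻¹ x, ?_, by simp⟩
        simp only [mem_filter, mem_univ, true_and] at hx ⊢
        rw [← hs, ← hus]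
        simpa using hx
      · intro x _; rfl
    rw [this, ← Finset.prod_mul_distrib]
    refine Finset.prod_eq_one fun x _ => ?_
    simp only [o]; split_ifs <;> norm_num
  · intro x h; rw [hu]; exact not_lt_of_gt h
  · intro x h; rw [hu]; exact not_lt_of_gt h
  · intro x
    rw [hu]
    by_cases h : u x = x
    · simp [h]
    · have h' : ¬ gmRep σ (u x) = gmRep σ x := fun hh => h (hself x hh)
      constructor <;> intro _
      · exact lt_or_gt_of_ne (Ne.symm h')
      · exact lt_or_gt_of_ne (Ne.symm h)

/-- toggle exponent -/
noncomputable def gmT (σ : Equiv.Perm (Fin n)) (x0 : Fin n) (x : Fin n) : ℤ :=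
  if gmRep σ x = gmRep σ x0 then ((gmD σ x0 / 2 : ℕ) : ℤ) else 0

theorem gm_T_inv (σ : Equiv.Perm (Fin n)) (x0 x y : Fin n) (h : gmRep σ x = gmRep σ y) :
    gmT σ x0 x = gmT σ x0 y := by
  unfold gmT; rw [h]

theorem gm_toggle (σ u : Equiv.Perm (Fin n)) (hu : ∀ x, u (u x) = x) (hc : u * σ = σ * u)
    (x0 : Fin n) (h0 : gmRep σ (u x0) = gmRep σ x0) (hev : Even (gmD σ x0)) :
    (∀ x, (u * gmShift σ (gmT σ x0)) ((u * gmShift σ (gmT σ x0)) x) = x) ∧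
    gmSg σ (u * gmShift σ (gmT σ x0)) = - gmSg σ u ∧ u * gmShift σ (gmT σ x0) ≠ u ∧
    gmShift σ (gmT σ x0) * gmShift σ (gmT σ x0) = 1 := by
  obtain ⟨k, hk⟩ := hev
  have hk2 : gmD σ x0 / 2 = k := by omega
  have hk0 : 0 < k := by have := gm_D_pos σ x0; omega
  have hC : ∀ x, gmRep σ x = gmRep σ x0 → gmT σ x0 x = k := by
    intro x hx; unfold gmT; rw [if_pos hx, hk2]
  have hnC : ∀ x, gmRep σ x ≠ gmRep σ x0 → gmT σ x0 x = 0 := by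
    intro x hx; unfold gmT; rw [if_neg hx]
  have hperiod : ∀ x, gmRep σ x = gmRep σ x0 → (σ ^ (k + k : ℤ)) x = x := by
    intro x hx
    rw [gm_D_iff, gm_D_congr σ x x0 hx, hk]; push_cast; exact dvd_rfl
  have hurep : ∀ x, gmRep σ x = gmRep σ x0 → gmRep σ (u x) = gmRep σ x0 := by
    intro x hx
    rw [gm_rep_comm σ u hc x x0 hx, h0]
  have hurep' : ∀ x, gmRep σ x ≠ gmRep σ x0 → gmRep σ (u x) ≠ gmRep σ x0 := by
    intro x hx h
    have := hurep _ h
    rw [hu] at this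
    exact hx this
  have hinv := gm_T_inv σ x0
  have hv := gm_v_apply σ u hc _ hinv
  have hvsq : ∀ x, (u * gmShift σ (gmT σ x0)) ((u * gmShift σ (gmT σ x0)) x) = x := by
    intro x
    rw [gm_v_sq σ u hc _ hinv, hu]
    by_cases hx : gmRep σ x = gmRep σ x0
    · rw [hC x hx, hC _ (hurep x hx), hperiod x hx]
    · rw [hnC x hx, hnC _ (hurep' x hx)]; simp
  refine ⟨hvsq, ?_, ?_, ?_⟩
  · obtain ⟨i, hi⟩ := (gm_rep_iff _ _ _).1 h0.symm
    have huC : ∀ x, gmRep σ x = gmRep σ x0 → u x = (σ ^ i) x := by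
      intro x hx
      obtain ⟨j, rfl⟩ := (gm_rep_iff _ _ _).1 hx.symm
      rw [gm_comm_zpow σ u hc, ← hi, ← Equiv.Perm.mul_apply, ← Equiv.Perm.mul_apply, ← zpow_add, ← zpow_add,
        add_comm]
    have h1 := hu x0
    rw [huC _ h0, huC _ rfl, ← Equiv.Perm.mul_apply, ← zpow_add, gm_D_iff, hk] at h1
    obtain ⟨t, ht⟩ := h1
    push_cast at ht
    have hit : i = k * t := by linarith
    have hpow : ∀ (a b : ℤ) (x), gmRep σ x = gmRep σ x0 → ((k + k : ℤ) ∣ a - b) → (σ ^ a) x = (σ ^ b) x := by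
      intro a b x hx hab
      rw [gm_zpow_eq, gm_D_congr σ x x0 hx, hk]; push_cast; exact hab
    rcases Int.even_or_odd t with ⟨s, hs⟩ | ⟨s, hs⟩
    · have hid : ∀ x, gmRep σ x = gmRep σ x0 → u x = x := by
        intro x hx
        rw [huC x hx, hpow i 0 x hx ⟨s, by rw [hit, hs]; ring⟩]; simp
      refine gm_core σ u _ hvsq (gm_v_comm σ u hc _ hinv) x0 k (by omega) hid ?_ ?_
      · intro x hx
        rw [hv, hC x hx, hid x hx]
      · intro x hx
        rw [hv, hnC x hx]; simp
    · have hid : ∀ x, gmRep σ x = gmRep σ x0 → u x = (σ ^ (k : ℤ)) x := by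
        intro x hx
        rw [huC x hx, hpow i k x hx ⟨s, by rw [hit, hs]; ring⟩]
      have := gm_core σ (u * gmShift σ (gmT σ x0)) u hu hc x0 k (by omega) ?_ hid ?_
      · rw [this, neg_neg]
      · intro x hx
        rw [hv, hC x hx, hid x hx, ← Equiv.Perm.mul_apply, ← zpow_add, hperiod x hx]
      · intro x hx
        rw [hv, hnC x hx]; simp
  · intro h
    have h1 := hv x0
    rw [h, hC x0 rfl] at h1
    have h2 := (gm_D_iff σ (u x0) k).1 h1.symm
    rw [gm_D_congr σ _ _ h0, hk] at h2
    have := Int.le_of_dvd (by omega) h2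
    push_cast at this
    omega
  · ext1 x
    rw [Equiv.Perm.mul_apply, gm_shift_apply σ _ hinv, gm_shift_apply σ _ hinv, 
      hinv _ _ (gm_rep_zpow σ x _), ← Equiv.Perm.mul_apply, ← zpow_add]
    by_cases hx : gmRep σ x = gmRep σ x0
    · rw [hC x hx, hperiod x hx]; rfl
    · rw [hnC x hx]; simp

theorem gm_comb (hn : 0 < n) (σ : Equiv.Perm (Fin n)) (Wt : Equiv.Perm (Fin n) → ℤ)
    (hW : ∀ u v : Equiv.Perm (Fin n), u * σ = σ * u → v * σ = σ * v →
      (∀ x, gmRep σ (u x) = gmRep σ (v x)) → Wt u = Wt v) :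
    ∑ u ∈ univ.filter (fun u : Equiv.Perm (Fin n) => u * u = 1 ∧ u * σ = σ * u), gmSg σ u * Wt u =
      ∑ τ ∈ univ.filter (fun τ : Equiv.Perm (Fin n) => τ * τ = σ), Wt τ := by
  classical
  have hne : Nonempty (Fin n) := ⟨⟨0, hn⟩⟩
  have hpt : ∀ {u : Equiv.Perm (Fin n)}, u * u = 1 ↔ ∀ x, u (u x) = x := by
    intro u
    constructor
    · intro h x; rw [← Equiv.Perm.mul_apply, h]; rfl
    · intro h; ext1 x; exact h x
  rw [← Finset.sum_filter_add_sum_filter_not _ 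
    (fun u : Equiv.Perm (Fin n) => ∀ x, gmRep σ (u x) = gmRep σ x → Odd (gmD σ x))]
  simp only [Finset.filter_filter]
  have hzero : ∑ u ∈ univ.filter (fun u : Equiv.Perm (Fin n) => (u * u = 1 ∧ u * σ = σ * u) ∧
      ¬ ∀ x, gmRep σ (u x) = gmRep σ x → Odd (gmD σ x)), gmSg σ u * Wt u = 0 := by
    let bad : Equiv.Perm (Fin n) → Fin n → Prop := fun u x => gmRep σ (u x) = gmRep σ x ∧ Even (gmD σ x)
    let x0 : Equiv.Perm (Fin n) → Fin n := fun u => Classical.epsilon (bad u)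
    have hx0 : ∀ u : Equiv.Perm (Fin n), (¬ ∀ x, gmRep σ (u x) = gmRep σ x → Odd (gmD σ x)) → bad u (x0 u) := by
      intro u h
      push Not at h
      obtain ⟨x, h1, h2⟩ := h
      exact Classical.epsilon_spec (p := bad u) ⟨x, h1, by simpa using h2⟩
    refine Finset.sum_involution (fun u _ => u * gmShift σ (gmT σ (x0 u))) ?_ ?_ ?_ ?_
    · intro u hu
      simp only [mem_filter, mem_univ, true_and] at hu
      obtain ⟨⟨h1, h2⟩, h3⟩ := hu
      have hb := hx0 u h3
      have ht := gm_toggle σ u (hpt.1 h1) h2 _ hb.1 hb.2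
      rw [ht.2.1, hW _ u (gm_v_comm σ u h2 _ (gm_T_inv σ _)) h2 (gm_v_rep σ u h2 _ (gm_T_inv σ _))]
      ring
    · intro u hu _
      simp only [mem_filter, mem_univ, true_and] at hu
      obtain ⟨⟨h1, h2⟩, h3⟩ := hu
      have hb := hx0 u h3
      exact (gm_toggle σ u (hpt.1 h1) h2 _ hb.1 hb.2).2.2.1
    · intro u hu
      simp only [mem_filter, mem_univ, true_and] at hu ⊢
      obtain ⟨⟨h1, h2⟩, h3⟩ := hu
      have hb := hx0 u h3
      refine ⟨⟨hpt.2 (gm_toggle σ u (hpt.1 h1) h2 _ hb.1 hb.2).1, gm_v_comm σ u h2 _ (gm_T_inv σ _)⟩, ?_⟩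
      simp only [gm_v_rep σ u h2 _ (gm_T_inv σ (x0 u))]
      exact h3
    · intro u hu
      simp only [mem_filter, mem_univ, true_and] at hu
      obtain ⟨⟨h1, h2⟩, h3⟩ := hu
      have hb := hx0 u h3
      have hbe : bad (u * gmShift σ (gmT σ (x0 u))) = bad u := by
        ext x
        simp only [bad, gm_v_rep σ u h2 _ (gm_T_inv σ (x0 u))]
      have : x0 (u * gmShift σ (gmT σ (x0 u))) = x0 u := by
        show Classical.epsilon _ = _
        rw [hbe]
      simp only [this]
      rw [mul_assoc, (gm_toggle σ u (hpt.1 h1) h2 _ hb.1 hb.2).2.2.2, mul_one]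
  rw [hzero, add_zero]
  have hsqc : ∀ τ : Equiv.Perm (Fin n), τ * τ = σ → τ * σ = σ * τ := by
    intro τ h; rw [← h, mul_assoc]
  have hneg : ∀ u : Equiv.Perm (Fin n), u * σ = σ * u → ∀ x y, gmRep σ x = gmRep σ y →
      (fun x => - gmE σ u x) x = (fun x => - gmE σ u x) y := by
    intro u h x y hxy
    simp only [gm_E_inv σ u h x y hxy]
  refine Finset.sum_bij' (fun u _ => u * gmShift σ (gmE σ u)) (fun τ _ => τ * (gmShift σ (gmE σ τ))⁻¹)
    ?_ ?_ ?_ ?_ ?_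
  · intro u hu
    simp only [mem_filter, mem_univ, true_and] at hu ⊢
    obtain ⟨⟨h1, h2⟩, h3⟩ := hu
    rw [hpt] at h1
    ext1 x
    rw [Equiv.Perm.mul_apply, gm_v_sq σ u h2 _ (gm_E_inv σ u h2), h1]
    have := gm_E_sum σ u h2 (fun x => by rw [h1]) h3 x
    rw [← gm_zpow_eq, zpow_one] at this
    exact this
  · intro τ hτ
    simp only [mem_filter, mem_univ, true_and] at hτ ⊢
    have h2 := hsqc τ hτ
    have hττ : ∀ x, τ (τ x) = σ x := fun x => by rw [← hτ]; rfl
    have hodd : ∀ x, gmRep σ (τ x) = gmRep σ x → Odd (gmD σ x) := by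
      intro x hx
      obtain ⟨i, hi⟩ := (gm_rep_iff _ _ _).1 hx.symm
      have h := hττ x
      rw [← hi, gm_comm_zpow σ τ h2, ← hi, ← Equiv.Perm.mul_apply, ← zpow_add] at h
      have h' : (σ ^ (i + i)) x = (σ ^ (1 : ℤ)) x := by rw [h, zpow_one]
      rw [gm_zpow_eq] at h'
      have h4 : Odd (i + i - 1) := ⟨i - 1, by ring⟩
      have h5 : Odd (gmD σ x : ℤ) := by
        rw [← Int.not_even_iff_odd]
        intro h6
        exact (Int.not_even_iff_odd.2 h4) (even_iff_two_dvd.2 ((even_iff_two_dvd.1 h6).trans h'))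
      exact_mod_cast h5
    have hr : ∀ x, gmRep σ (τ (τ x)) = gmRep σ x := by
      intro x; rw [hττ]; simpa using gm_rep_zpow σ x 1
    rw [gm_shift_inv]
    refine ⟨⟨?_, gm_v_comm σ τ h2 _ (hneg τ h2)⟩, ?_⟩
    · rw [hpt]
      intro x
      rw [gm_v_sq σ τ h2 _ (hneg τ h2), hττ]
      have := gm_E_sum σ τ h2 hr hodd x
      rw [← Equiv.Perm.mul_apply, ← zpow_add_one, gm_D_iff]
      rw [← dvd_neg] at this
      have h7 : -gmE σ τ x + -gmE σ τ (τ x) + 1 = -(gmE σ τ x + gmE σ τ (τ x) - 1) := by ring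
      rw [h7]; exact this
    · intro x
      rw [gm_v_rep σ τ h2 _ (hneg τ h2)]
      exact hodd x
  · intro u hu
    simp only [mem_filter, mem_univ, true_and] at hu
    obtain ⟨⟨h1, h2⟩, h3⟩ := hu
    rw [gm_E_congr σ _ u (gm_v_rep σ u h2 _ (gm_E_inv σ u h2)), mul_inv_cancel_right]
  · intro τ hτ
    simp only [mem_filter, mem_univ, true_and] at hτ
    have h2 := hsqc τ hτ
    have : gmE σ (τ * (gmShift σ (gmE σ τ))⁻¹) = gmE σ τ := by
      rw [gm_shift_inv]
      exact gm_E_congr σ _ τ (gm_v_rep σ τ h2 _ (hneg τ h2))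
    rw [this, inv_mul_cancel_right]
  · intro u hu
    simp only [mem_filter, mem_univ, true_and] at hu
    obtain ⟨⟨h1, h2⟩, h3⟩ := hu
    rw [gm_sg_one σ u (hpt.1 h1) h2 h3, one_mul]
    exact (hW _ u (gm_v_comm σ u h2 _ (gm_E_inv σ u h2)) h2 (gm_v_rep σ u h2 _ (gm_E_inv σ u h2))).symm

end CombPart2

section WeightPart
variable {n r : ℕ}

theorem gm_half (hr : Odd r) : ∃ h : ZMod r, h + h = 1 := by
  obtain ⟨k, hk⟩ := hr
  refine ⟨(k : ZMod r) + 1, ?_⟩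
  have : ((2 * k + 1 : ℕ) : ZMod r) = 0 := by rw [← hk]; simp
  push_cast at this
  linear_combination this

theorem gm_coset {A : Type} [AddCommGroup A] [Fintype A] (P Q : A → Prop) [DecidablePred P]
    [DecidablePred Q] (y0 : A) (h : ∀ k, P (y0 + k) ↔ Q k) :
    (univ.filter P).card = (univ.filter Q).card := by
  symm
  refine Finset.card_equiv (Equiv.addLeft y0) ?_
  intro k
  simp [h]

/-- count of doubly invariant colourings -/
def gmK [NeZero r] (σ u : Equiv.Perm (Fin n)) : ℕ :=
  (univ.filter fun k : Fin n → ZMod r => (∀ x, k (σ x) = k x) ∧ ∀ x, k (u x) = k x).card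

/-- weight -/
def gmWt [NeZero r] (σ : Equiv.Perm (Fin n)) (z : Fin n → ZMod r) (u : Equiv.Perm (Fin n)) : ℤ :=
  if ∃ c : Fin n → ZMod r, ∀ x, c (σ x) = c x + z x + z (u x) then (gmK (r := r) σ u : ℤ) else 0

theorem gm_inv_rep {A : Type} (σ : Equiv.Perm (Fin n)) (k : Fin n → A) (hk : ∀ x, k (σ x) = k x)
    (x y : Fin n) (h : gmRep σ x = gmRep σ y) : k x = k y := by
  obtain ⟨i, rfl⟩ := (gm_rep_iff σ x y).1 h
  symm
  induction i using Int.induction_on with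
  | zero => rfl
  | succ i ih =>
    rw [add_comm, zpow_one_add, Equiv.Perm.mul_apply, hk]
    exact ih (gm_rep_zpow σ x _).symm
  | pred i ih =>
    rw [← ih (gm_rep_zpow σ x _).symm, ← hk, ← Equiv.Perm.mul_apply, ← zpow_one_add]
    congr 3
    ring

theorem gm_exp (σ x y) (h : gmRep (n := n) σ x = gmRep σ y) : ∃ i : ℕ, (σ ^ i) x = y := by
  obtain ⟨i, hi⟩ := (gm_rep_iff σ x y).1 h
  have hp := gm_D_pos σ x
  refine ⟨(i % (gmD σ x : ℤ)).toNat, ?_⟩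
  rw [← hi, ← zpow_natCast, Int.toNat_of_nonneg (Int.emod_nonneg _ (by omega)), gm_zpow_eq]
  rw [Int.emod_def]
  exact ⟨-(i / (gmD σ x : ℤ)), by ring⟩

theorem gm_wt_ex (σ u v : Equiv.Perm (Fin n)) (z : Fin n → ZMod r) (hu : u * σ = σ * u) (hv : v * σ = σ * v)
    (h : ∀ x, gmRep σ (u x) = gmRep σ (v x))
    (hc : ∃ c : Fin n → ZMod r, ∀ x, c (σ x) = c x + z x + z (u x)) :
    ∃ c : Fin n → ZMod r, ∀ x, c (σ x) = c x + z x + z (v x) := by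
  obtain ⟨c, hc⟩ := hc
  choose e he using fun x => gm_exp σ _ _ (h x)
  have he' : ∀ x, (σ ^ (e (gmRep σ x))) (u x) = v x := by
    intro x
    obtain ⟨i, hi⟩ := (gm_rep_iff σ _ _).1 (gm_rep_rep σ x)
    have h1 := he (gmRep σ x)
    have h2 : u x = (σ ^ i) (u (gmRep σ x)) := by rw [← gm_comm_zpow σ u hu, hi]
    have h3 : v x = (σ ^ i) (v (gmRep σ x)) := by rw [← gm_comm_zpow σ v hv, hi]
    rw [h2, h3, ← h1]
    exact gm_comm_zpow σ (σ ^ e (gmRep σ x)) (Commute.pow_self σ _) i _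
  refine ⟨fun x => c x + ∑ j ∈ range (e (gmRep σ x)), z ((σ ^ j) (u x)), ?_⟩
  intro x
  have h1 : gmRep σ (σ x) = gmRep σ x := by simpa using gm_rep_zpow σ x 1
  have h2 : u (σ x) = σ (u x) := by simpa using gm_comm_zpow σ u hu 1 x
  simp only [h1, h2]
  have h3 := Finset.sum_range_succ (fun j => z ((σ ^ j) (u x))) (e (gmRep σ x))
  rw [Finset.sum_range_succ'] at h3
  rw [he'] at h3
  simp only [pow_succ, Equiv.Perm.mul_apply, pow_zero, Equiv.Perm.one_apply] at h3
  rw [hc]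
  linear_combination h3

theorem gm_wt_inv [NeZero r] (σ : Equiv.Perm (Fin n)) (z : Fin n → ZMod r) (u v : Equiv.Perm (Fin n))
    (hu : u * σ = σ * u) (hv : v * σ = σ * v)
    (h : ∀ x, gmRep σ (u x) = gmRep σ (v x)) : gmWt σ z u = gmWt σ z v := by
  unfold gmWt
  have h1 : (∃ c : Fin n → ZMod r, ∀ x, c (σ x) = c x + z x + z (u x)) ↔
    (∃ c : Fin n → ZMod r, ∀ x, c (σ x) = c x + z x + z (v x)) :=
    ⟨gm_wt_ex σ u v z hu hv h, gm_wt_ex σ v u z hv hu (fun x => (h x).symm)⟩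
  have h2 : gmK (r := r) σ u = gmK (r := r) σ v := by
    unfold gmK
    congr 1
    ext k
    simp only [mem_filter, mem_univ, true_and]
    refine and_congr_right fun hk => forall_congr' fun x => ?_
    rw [gm_inv_rep σ k hk _ _ (h x)]
  simp only [h1, h2]

theorem gm_count_u [NeZero r] (hr : Odd r) (σ : Equiv.Perm (Fin n)) (z : Fin n → ZMod r) (u : Equiv.Perm (Fin n))
    (hu : ∀ x, u (u x) = x) (hc : u * σ = σ * u) :
    ((univ.filter fun c : Fin n → ZMod r => (∀ x, c (u x) = c x) ∧
      ∀ x, c (σ x) = c x + z x + z (u x)).card : ℤ) = gmWt σ z u := by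
  unfold gmWt
  obtain ⟨t, ht⟩ := gm_half hr
  have h2 : ∀ x, u (σ x) = σ (u x) := fun x => by simpa using gm_comm_zpow σ u hc 1 x
  split_ifs with h
  · obtain ⟨c, hc⟩ := h
    rw [Nat.cast_inj, gmK]
    refine gm_coset _ _ (fun x => t * (c x + c (u x))) ?_
    intro k
    simp only [Pi.add_apply, hu, h2, hc]
    rw [and_comm]
    refine and_congr (forall_congr' fun x => ?_) (forall_congr' fun x => ?_)
    · constructor
      · intro h; linear_combination h - (z x + z (u x)) * ht
      · intro h; linear_combination h + (z x + z (u x)) * ht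
    · constructor
      · intro h; linear_combination h
      · intro h; linear_combination h
  · rw [Nat.cast_eq_zero, Finset.card_eq_zero, Finset.filter_eq_empty_iff]
    intro c _ hh
    exact h ⟨c, hh.2⟩

theorem gm_count_t [NeZero r] (hr : Odd r) (σ : Equiv.Perm (Fin n)) (z : Fin n → ZMod r) (τ : Equiv.Perm (Fin n))
    (hτ : τ * τ = σ) :
    ((univ.filter fun y : Fin n → ZMod r => ∀ x, y (τ x) = y x + z x).card : ℤ) = gmWt σ z τ := by
  unfold gmWt
  obtain ⟨t, ht⟩ := gm_half hr
  have h2 : ∀ x, σ x = τ (τ x) := fun x => by rw [← hτ]; rfl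
  split_ifs with h
  · obtain ⟨c, hc⟩ := h
    rw [Nat.cast_inj, gmK]
    refine gm_coset _ _ (fun x => c x + t * (c (τ x) - c x - z x)) ?_
    intro k
    simp only [Pi.add_apply]
    have h4 : (∀ x, k (σ x) = k x) ∧ (∀ x, k (τ x) = k x) ↔ ∀ x, k (τ x) = k x :=
      ⟨fun h => h.2, fun h => ⟨fun x => by rw [h2, h, h], h⟩⟩
    rw [h4]
    refine (forall_congr' fun x => ?_)
    rw [← h2, hc]
    constructor
    · intro h; linear_combination h + (c (τ x) - c x - z x) * ht
    · intro h; linear_combination h - (c (τ x) - c x - z x) * ht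
  · rw [Nat.cast_eq_zero, Finset.card_eq_zero, Finset.filter_eq_empty_iff]
    intro c _ hh
    refine h ⟨c, fun x => ?_⟩
    rw [h2, hh, hh]

theorem gm_comb2 [NeZero r] (hn : 0 < n) (hr : Odd r) (σ : Equiv.Perm (Fin n)) (z : Fin n → ZMod r) :
    ∑ u ∈ univ.filter (fun u : Equiv.Perm (Fin n) => u * u = 1 ∧ u * σ = σ * u), gmSg σ u *
      ((univ.filter fun c : Fin n → ZMod r => (∀ x, c (u x) = c x) ∧
        ∀ x, c (σ x) = c x + z x + z (u x)).card : ℤ) =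
    ∑ τ ∈ univ.filter (fun τ : Equiv.Perm (Fin n) => τ * τ = σ),
      ((univ.filter fun y : Fin n → ZMod r => ∀ x, y (τ x) = y x + z x).card : ℤ) := by
  have := gm_comb hn σ (gmWt σ z) (gm_wt_inv σ z)
  convert this using 1
  · refine Finset.sum_congr rfl fun u hu => ?_
    simp only [mem_filter, mem_univ, true_and] at hu
    rw [gm_count_u hr σ z u (fun x => by rw [← Equiv.Perm.mul_apply, hu.1]; rfl) hu.2]
  · refine Finset.sum_congr rfl fun u hu => ?_
    simp only [mem_filter, mem_univ, true_and] at hu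
    rw [gm_count_t hr σ z u hu]

end WeightPart

section ConjPart
variable {n r : ℕ}

theorem gm_k (σ : Equiv.Perm (Fin n)) : ∃ k : Fin n → ℕ, ∀ x, k x < gmD σ (gmRep σ x) ∧
    (σ ^ (k x : ℤ)) (gmRep σ x) = x := by
  have : ∀ x, ∃ k : ℕ, k < gmD σ (gmRep σ x) ∧ (σ ^ (k : ℤ)) (gmRep σ x) = x := by
    intro x
    obtain ⟨i, hi⟩ := gm_exp σ _ _ (gm_rep_rep σ x)
    refine ⟨i % gmD σ (gmRep σ x), Nat.mod_lt _ (gm_D_pos _ _), ?_⟩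
    conv_rhs => rw [← hi, ← zpow_natCast]
    rw [gm_zpow_eq]
    push_cast
    rw [Int.emod_def]
    exact ⟨-((i : ℤ) / (gmD σ (gmRep σ x) : ℤ)), by ring⟩
  choose k hk using this
  exact ⟨k, hk⟩

theorem gm_conj (σ : Equiv.Perm (Fin n)) (z : Fin n → ZMod r) :
    ∃ (s : Equiv.Perm (Fin n)) (y : Fin n → ZMod r), (∀ x, s (σ x) = σ⁻¹ (s x)) ∧
      ∀ x, y (σ x) + z x = z (σ⁻¹ (s x)) + y x := by
  obtain ⟨k, hk⟩ := gm_k σ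
  have hrep : ∀ x, gmRep σ (σ x) = gmRep σ x := fun x => by simpa using gm_rep_zpow σ x 1
  have hk1 : ∀ x, (gmD σ (gmRep σ x) : ℤ) ∣ (k (σ x) : ℤ) - (k x + 1) := by
    intro x
    rw [← gm_zpow_eq]
    have := (hk (σ x)).2
    rw [hrep] at this
    rw [this, add_comm, zpow_one_add, Equiv.Perm.mul_apply, (hk x).2]
  let s0 : Fin n → Fin n := fun x => (σ ^ (-(k x : ℤ))) (gmRep σ x)
  have hs0r : ∀ x, gmRep σ (s0 x) = gmRep σ x := fun x => by
    simp only [s0]; rw [gm_rep_zpow, gm_rep_rep]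
  have hs0 : ∀ x, s0 (s0 x) = x := by
    intro x
    have h1 := (hk (s0 x)).2
    rw [hs0r] at h1
    show (σ ^ (-(k (s0 x) : ℤ))) (gmRep σ (s0 x)) = x
    rw [hs0r]
    conv_rhs => rw [← (hk x).2]
    have h2 : (σ ^ (k (s0 x) : ℤ)) (gmRep σ x) = (σ ^ (-(k x : ℤ))) (gmRep σ x) := h1
    rw [gm_zpow_eq] at h2 ⊢
    rw [← dvd_neg] at h2
    have e : -((k (s0 x) : ℤ) - -(k x : ℤ)) = -(k (s0 x) : ℤ) - k x := by ring
    rw [e] at h2; exact h2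
  have hs1 : ∀ x, s0 (σ x) = σ⁻¹ (s0 x) := by
    intro x
    simp only [s0]
    rw [hrep, ← Equiv.Perm.mul_apply, ← zpow_neg_one, ← zpow_add, gm_zpow_eq]
    have := hk1 x
    rw [← dvd_neg] at this
    have e : -((k (σ x) : ℤ) - (k x + 1)) = -(k (σ x) : ℤ) - (-1 + -(k x : ℤ)) := by ring
    rw [e] at this; exact this
  -- the cocycle
  let f : Fin n → ℕ → ZMod r := fun a j => z ((σ ^ (-(j : ℤ) - 1)) a) - z ((σ ^ (j : ℤ)) a)
  have hloop : ∀ a, ∑ j ∈ range (gmD σ a), f a j = 0 := by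
    intro a
    simp only [f, Finset.sum_sub_distrib]
    rw [sub_eq_zero, ← Finset.sum_range_reflect]
    refine Finset.sum_congr rfl fun j hj => ?_
    rw [mem_range] at hj
    congr 1
    rw [gm_zpow_eq]
    refine ⟨-1, ?_⟩
    have : ((gmD σ a - 1 - j : ℕ) : ℤ) = (gmD σ a : ℤ) - 1 - j := by omega
    rw [this]; ring
  refine ⟨⟨s0, s0, hs0, hs0⟩, fun x => ∑ j ∈ range (k x), f (gmRep σ x) j, hs1, ?_⟩
  intro x
  show _ = z (σ⁻¹ (s0 x)) + _
  have e1 : f (gmRep σ x) (k x) = z (σ⁻¹ (s0 x)) - z x := by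
    simp only [f, s0]
    rw [(hk x).2, ← Equiv.Perm.mul_apply, ← zpow_neg_one, ← zpow_add]
    congr 4
    ring_nf
  have e2 : ∑ j ∈ range (k (σ x)), f (gmRep σ x) j = ∑ j ∈ range (k x + 1), f (gmRep σ x) j := by
    have h1 := hk1 x
    have h2 := (hk x).1
    have h3 := (hk (σ x)).1
    rw [hrep] at h3
    rcases Nat.lt_or_ge (k x + 1) (gmD σ (gmRep σ x)) with h | h
    · have : (k (σ x) : ℤ) - (k x + 1) = 0 := by
        refine Int.eq_zero_of_abs_lt_dvd h1 ?_
        rw [abs_lt]; constructor <;> omega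
      have : k (σ x) = k x + 1 := by omega
      rw [this]
    · have h4 : k x + 1 = gmD σ (gmRep σ x) := by omega
      have h5 : (k (σ x) : ℤ) = 0 := by
        refine Int.eq_zero_of_abs_lt_dvd (m := (gmD σ (gmRep σ x) : ℤ)) ?_ ?_
        · have h6 : ((k x : ℤ) + 1) = gmD σ (gmRep σ x) := by exact_mod_cast h4
          rw [h6] at h1
          simpa using h1
        · rw [abs_lt]; constructor <;> omega
      have h6 : k (σ x) = 0 := by omega
      rw [h6, h4, hloop]; simp
  rw [Finset.sum_range_succ, e1] at e2
  simp only [hrep]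
  linear_combination e2

theorem gm_hconj (g : Wreath r n) : ∃ h, h * g * h⁻¹ = (Wreath.bar g)⁻¹ := by
  obtain ⟨s, y, h1, h2⟩ := gm_conj g.1 g.2
  let h : Wreath r n := ⟨s, y⟩
  refine ⟨h, mul_inv_eq_iff_eq_mul.2 ?_⟩
  refine Prod.ext (Equiv.ext h1) (funext fun i => ?_)
  show y (g.1 i) + g.2 i = - -g.2 (g.1⁻¹ (s i)) + y i
  rw [h2, neg_neg]

end ConjPart

section ModelPart
variable {n r : ℕ}

theorem gm_abs_iff (w : Wreath r n) : w * Wreath.bar w = 1 ↔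
    w.1 * w.1 = 1 ∧ ∀ x, w.2 (w.1 x) = w.2 x := by
  constructor
  · intro h
    refine ⟨congrArg Prod.fst h, fun x => ?_⟩
    have h2 : w.2 (w.1 x) + -w.2 x = 0 := congrFun (congrArg Prod.snd h) x
    linear_combination h2
  · intro h
    refine Prod.ext h.1 (funext fun x => ?_)
    show w.2 (w.1 x) + -w.2 x = 0
    rw [h.2]; ring

theorem gm_sqrt_iff (v π : Wreath r n) : v * Wreath.bar v = π ↔
    v.1 * v.1 = π.1 ∧ ∀ x, v.2 (v.1 x) = v.2 x + π.2 x := by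
  constructor
  · intro h
    refine ⟨congrArg Prod.fst h, fun x => ?_⟩
    have h2 : v.2 (v.1 x) + -v.2 x = π.2 x := congrFun (congrArg Prod.snd h) x
    linear_combination h2
  · intro h
    refine Prod.ext h.1 (funext fun x => ?_)
    show v.2 (v.1 x) + -v.2 x = π.2 x
    rw [h.2]; ring

theorem gm_fix_iff (π w : Wreath r n) : π * w * Wreath.tr π = w ↔
    w.1 * π.1 = π.1 * w.1 ∧ ∀ x, w.2 (π.1 x) = w.2 x + π.2 x + π.2 (w.1 x) := by
  unfold Wreath.tr
  rw [mul_inv_eq_iff_eq_mul]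
  constructor
  · intro h
    refine ⟨(congrArg Prod.fst h).symm, fun x => ?_⟩
    have h2 : π.2 (w.1 x) + w.2 x = w.2 (π.1 x) + -π.2 x := congrFun (congrArg Prod.snd h) x
    linear_combination -h2
  · intro h
    refine Prod.ext h.1.symm (funext fun x => ?_)
    show π.2 (w.1 x) + w.2 x = w.2 (π.1 x) + -π.2 x
    rw [h.2]; ring

theorem gm_abs_inv (w : AbsInv r n) (x : Fin n) : w.1.1 (w.1.1 x) = x := by
  rw [← Equiv.Perm.mul_apply, ((gm_abs_iff w.1).1 w.2).1]; rfl

theorem gm_trace_sum [NeZero r] (hn : 0 < n) (hr : Odd r) (π : Wreath r n) :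
    ∑ w : AbsInv r n, (if conjAbs π w = w then signO π w.1 else 0) =
      ((univ.filter fun v : Wreath r n => v * Wreath.bar v = π).card : ℤ) := by
  have h := gm_comb2 hn hr π.1 π.2
  have hL : ∑ w : AbsInv r n, (if conjAbs π w = w then signO π w.1 else 0) =
      ∑ u ∈ univ.filter (fun u : Equiv.Perm (Fin n) => u * u = 1 ∧ u * π.1 = π.1 * u), gmSg π.1 u *
      ((univ.filter fun c : Fin n → ZMod r => (∀ x, c (u x) = c x) ∧
        ∀ x, c (π.1 x) = c x + π.2 x + π.2 (u x)).card : ℤ) := by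
    rw [← Finset.sum_filter]
    have h1 : ∀ u : Equiv.Perm (Fin n), gmSg π.1 u *
      ((univ.filter fun c : Fin n → ZMod r => (∀ x, c (u x) = c x) ∧
        ∀ x, c (π.1 x) = c x + π.2 x + π.2 (u x)).card : ℤ) =
        ∑ c ∈ (univ.filter fun c : Fin n → ZMod r => (∀ x, c (u x) = c x) ∧
        ∀ x, c (π.1 x) = c x + π.2 x + π.2 (u x)), gmSg π.1 u := by
      intro u; rw [Finset.sum_const, nsmul_eq_mul, mul_comm]
    simp only [h1]
    rw [Finset.sum_sigma']
    refine Finset.sum_bij (fun w _ => ⟨w.1.1, w.1.2⟩) ?_ ?_ ?_ ?_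
    · intro w hw
      simp only [mem_filter, mem_univ, true_and, mem_sigma] at hw ⊢
      have e1 := (gm_abs_iff w.1).1 w.2
      have e2 := (gm_fix_iff π w.1).1 (congrArg Subtype.val hw)
      exact ⟨⟨e1.1, e2.1⟩, e1.2, e2.2⟩
    · intro w _ w' _ e
      simp only [Sigma.mk.injEq, heq_eq_eq] at e
      exact Subtype.ext (Prod.ext e.1 e.2)
    · rintro ⟨u, c⟩ hp
      simp only [mem_filter, mem_univ, true_and, mem_sigma] at hp
      let w : Wreath r n := ⟨u, c⟩
      refine ⟨⟨w, (gm_abs_iff w).2 ⟨hp.1.1, hp.2.1⟩⟩, ?_, rfl⟩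
      refine mem_filter.2 ⟨mem_univ _, ?_⟩
      exact Subtype.ext ((gm_fix_iff π w).2 ⟨hp.1.2, hp.2.2⟩)
    · intro w _
      exact gm_signO π w.1 (gm_abs_inv w)
  rw [hL, h, ← Nat.cast_sum, ← Finset.card_sigma, Nat.cast_inj]
  symm
  refine Finset.card_bij (fun v _ => ⟨v.1, v.2⟩) ?_ ?_ ?_
  · intro v hv
    simp only [mem_filter, mem_univ, true_and, mem_sigma] at hv ⊢
    exact (gm_sqrt_iff v π).1 hv
  · intro w _ w' _ e
    simp only [Sigma.mk.injEq, heq_eq_eq] at e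
    exact Prod.ext e.1 e.2
  · rintro ⟨u, c⟩ hp
    simp only [mem_filter, mem_univ, true_and, mem_sigma] at hp
    let w : Wreath r n := ⟨u, c⟩
    refine ⟨w, ?_, rfl⟩
    simp only [mem_filter, mem_univ, true_and]
    exact (gm_sqrt_iff w π).2 hp

theorem gm_conj_one (w : AbsInv r n) : conjAbs 1 w = w := by
  refine Subtype.ext ((gm_fix_iff 1 w.1).2 ⟨rfl, fun x => ?_⟩)
  show w.1.2 x = w.1.2 x + 0 + 0
  ring

theorem gm_conj_mul (a b : Wreath r n) (w : AbsInv r n) :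
    conjAbs (a * b) w = conjAbs a (conjAbs b w) := by
  refine Subtype.ext ?_
  show a * b * w.1 * Wreath.tr (a * b) = a * (b * w.1 * Wreath.tr b) * Wreath.tr a
  unfold Wreath.tr
  rw [Wreath.bar_mul]
  group

theorem gm_sign_one (w : AbsInv r n) : signO 1 w.1 = 1 := by
  rw [gm_signO _ _ (gm_abs_inv w)]
  unfold gmSg
  refine Finset.prod_eq_one fun x hx => ?_
  simp only [mem_filter, mem_univ, true_and] at hx
  exact if_neg (not_lt_of_gt hx)

theorem gm_sign_mul (a b : Wreath r n) (w : AbsInv r n) :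
    signO (a * b) w.1 = signO a (conjAbs b w).1 * signO b w.1 := by
  rw [gm_signO _ _ (gm_abs_inv w), gm_signO _ _ (gm_abs_inv w), gm_signO _ _ (gm_abs_inv _)]
  exact gm_cocycle a.1 b.1 w.1.1 (gm_abs_inv w)

/-- the operators of the model -/
noncomputable def gmOp [NeZero r] (π : Wreath r n) : (AbsInv r n → ℂ) →ₗ[ℂ] (AbsInv r n → ℂ) :=
  (Pi.basisFun ℂ (AbsInv r n)).constr ℂ
    (fun w => (signO π w.1 : ℂ) • (Pi.single (conjAbs π w) (1 : ℂ) : AbsInv r n → ℂ))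

theorem gm_Op_single [NeZero r] (π : Wreath r n) (w : AbsInv r n) :
    gmOp π (Pi.single w (1 : ℂ)) =
      (signO π w.1 : ℂ) • (Pi.single (conjAbs π w) (1 : ℂ) : AbsInv r n → ℂ) := by
  have := (Pi.basisFun ℂ (AbsInv r n)).constr_basis ℂ
    (fun w => (signO π w.1 : ℂ) • (Pi.single (conjAbs π w) (1 : ℂ) : AbsInv r n → ℂ)) w
  rw [Pi.basisFun_apply] at this
  exact this

/-- the model -/
noncomputable def gmRho [NeZero r] : Representation ℂ (Wreath r n) (AbsInv r n → ℂ) where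
  toFun := gmOp
  map_one' := by
    refine (Pi.basisFun ℂ (AbsInv r n)).ext fun w => ?_
    rw [Pi.basisFun_apply, gm_Op_single, gm_conj_one, gm_sign_one]
    simp
  map_mul' a b := by
    refine (Pi.basisFun ℂ (AbsInv r n)).ext fun w => ?_
    rw [Pi.basisFun_apply, gm_Op_single, Module.End.mul_apply, gm_Op_single, map_smul, gm_Op_single,
      gm_conj_mul, gm_sign_mul, smul_smul]
    push_cast
    rw [mul_comm]

theorem gm_trace [NeZero r] (hn : 0 < n) (hr : Odd r) (π : Wreath r n) :
    LinearMap.trace ℂ (AbsInv r n → ℂ) (gmRho π) =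
      ((univ.filter fun v : Wreath r n => v * Wreath.bar v = π).card : ℂ) := by
  have h := congrArg (Int.cast : ℤ → ℂ) (gm_trace_sum hn hr π)
  rw [LinearMap.trace_eq_matrix_trace ℂ (Pi.basisFun ℂ (AbsInv r n)), Matrix.trace]
  push_cast at h
  rw [← h]
  refine Finset.sum_congr rfl fun w _ => ?_
  rw [Matrix.diag_apply, LinearMap.toMatrix_apply, Pi.basisFun_apply]
  show (Pi.basisFun ℂ (AbsInv r n)).repr (gmOp π _) w = _
  rw [gm_Op_single, Pi.basisFun_repr, Pi.smul_apply, Pi.single_apply]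
  by_cases e : conjAbs π w = w
  · simp [e]
  · simp [e, Ne.symm e]

end ModelPart

/-- **Gelfand model for `ℤ_r ≀ S_n`, `r` odd** (Theorem `t.model`, odd case):
the map `ρ` with `ρ(π) C_w = sign_o(π,w) · C_{π w πᵗ}` on the vector space `V_{r,n}`
with basis `{C_w : w ∈ I_{r,n}}` is a group homomorphism (a linear representation),
and the trace of `ρ(π)` equals `∑_{χ ∈ Irr(G(r,n))} χ(π)` for every `π`; i.e. `ρ` is a
Gelfand model, equivalent to the multiplicity-free sum of all irreducibles. -/
theorem gelfand_model_odd
    (r n : ℕ) [NeZero r] (hn : 0 < n) (hr : Odd r)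
    {ι : Type} [Fintype ι] (V : ι → FDRep ℂ (Wreath r n))
    (hV : IsCompleteIrrFamily V) :
    ∃ ρ : Representation ℂ (Wreath r n) (AbsInv r n → ℂ),
      (∀ (π : Wreath r n) (w : AbsInv r n),
        ρ π (Pi.single w (1 : ℂ)) = (signO π w.1 : ℂ) • (Pi.single (conjAbs π w) (1 : ℂ) : AbsInv r n → ℂ)) ∧
      ∀ π : Wreath r n,
        LinearMap.trace ℂ (AbsInv r n → ℂ) (ρ π) = ∑ i, (V i).character π := by
  refine ⟨gmRho, gm_Op_single, fun π => ?_⟩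
  exact gm_main1 Wreath.barAut Wreath.bar_bar gm_hconj V hV gmRho (gm_trace hn hr) π
end
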